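/- arXiv:math/0702114 — 3 statements merged into one kernel-verified Lean document; each statement's English description precedes it below -/
import Mathlib

section
/- The sextic surface F₁·F₂·F₃·F₄·S₅,₆ − S³ = 0 has exactly 28 singular points in ℙ³(ℂ), and every singular point lies on the quadric S = 0. -/
open MvPolynomial

/-- The quadric `S = y₀·y₁ − y₂·y₃`. -/
noncomputable def polyS : MvPolynomial (Fin 4) ℂ := X 0 * X 1 - X 2 * X 3

/-- The six linear forms `F₁, …, F₆` (indexed by `Fin 6`). -/
noncomputable def polyF : Fin 6 → MvPolynomial (Fin 4) ℂ :=
  ![X 0,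
    X 1,
    4 * X 0 - 2 * X 2 - 2 * X 3 + X 1,
    X 0 - 2 * X 2 - 2 * X 3 + 4 * X 1,
    X 0 + X 2 + X 3 + X 1,
    X 0 - X 2 - X 3 + X 1]
/-- The quadric `R = y₀² + y₁² + y₂² + y₃²`. -/
noncomputable def polyR : MvPolynomial (Fin 4) ℂ := X 0 ^ 2 + X 1 ^ 2 + X 2 ^ 2 + X 3 ^ 2

/-- The linear form `R₁ = y₀ + 2y₂ + 3y₃ + 4y₁`. -/
noncomputable def polyR1 : MvPolynomial (Fin 4) ℂ := X 0 + 2 * X 2 + 3 * X 3 + 4 * X 1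

/-- The linear form `R₂ = 4y₀ + 3y₂ + 2y₃ + y₁`. -/
noncomputable def polyR2 : MvPolynomial (Fin 4) ℂ := 4 * X 0 + 3 * X 2 + 2 * X 3 + X 1

noncomputable def polyS12 : MvPolynomial (Fin 4) ℂ := polyF 0 * polyF 1 + 2 * polyS
noncomputable def polyS23 : MvPolynomial (Fin 4) ℂ := polyF 1 * polyF 2 + 2 * polyS
noncomputable def polyS34 : MvPolynomial (Fin 4) ℂ := polyF 2 * polyF 3 + 2 * polyS
noncomputable def polyS56 : MvPolynomial (Fin 4) ℂ := polyF 4 * polyF 5 + 2 * polyS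
noncomputable def polyS123 : MvPolynomial (Fin 4) ℂ := polyF 0 * polyF 1 * polyF 2 + polyS * polyR1
noncomputable def polyS456 : MvPolynomial (Fin 4) ℂ := polyF 3 * polyF 4 * polyF 5 + polyS * polyR2
noncomputable def polyS3456 : MvPolynomial (Fin 4) ℂ :=
  polyF 2 * polyF 3 * polyF 4 * polyF 5 + polyS * polyR
noncomputable def polyS23456 : MvPolynomial (Fin 4) ℂ :=
  polyF 1 * polyF 2 * polyF 3 * polyF 4 * polyF 5 + polyR1 * polyS * polyR
/-- The sextic `F₁·F₂·F₃·F₄·S₅,₆ − S³`. -/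
noncomputable def polySextic9 : MvPolynomial (Fin 4) ℂ :=
  polyF 0 * polyF 1 * polyF 2 * polyF 3 * polyS56 - polyS ^ 3

/-!
Write the sextic as `P - S³` with `P = F₁F₂F₃F₄S₅,₆`.

On the quadric `S = 0`, the sextic is singular exactly where `P` is, and since the five factors of
`P` are smooth surfaces, this happens where two of them meet. Identify the quadric with `ℙ¹ × ℙ¹`.
Each plane `F_k = 0` is tangent to it and cuts out `{p_k} × ℙ¹ ∪ ℙ¹ × {p_k}`, and `S₅,₆` restricts
to `F₅F₆`. The singular points on the quadric are therefore the `(p_k, p_l)` with `k` and `l` on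
different factors: of the `36` pairs, the `8` in `{1}², …, {4}², {5, 6}²` are excluded.

Off the quadric, a singular point is a critical point of `P / S³` with value `1`. If `y₂ ≠ y₃`, the
derivatives along `y₂` and `y₃` give `2F₁F₂F₃F₄ = 3S²`, whence `4S = -3F₅F₆` and
`32F₁F₂F₃F₄ = 27(F₅F₆)²`. The forms `F_k` only involve `y₀`, `y₁` and `y₂ + y₃`, so the point can be
moved to the quadric without changing them. There `F₁F₂F₃F₄ / (F₅F₆)²` splits as a product of two
critical values of the function `f / g²` on `ℙ¹`, which are `-1` and `-1/4`; their products differ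
from `27/32`. If `y₂ = y₃`, the critical values of `P / S³` on this plane are computed directly:
they are `18`, `500/27`, `-250/27` and `-36`, and for `y₀ = y₁` also `6` and `96`, but never `1`.
-/

/-- `x` annihilates all partial derivatives of `f`: for `f` homogeneous and `x ≠ 0` this says that
the hypersurface `f = 0` is singular at the projective point `[x]`. No condition `f(x) = 0` is
imposed; for homogeneous `f` it follows from Euler's identity. -/
def IsSingularAt {σ R : Type*} [CommSemiring R] (f : MvPolynomial σ R) (x : σ → R) : Prop :=
  ∀ i, eval x (pderiv i f) = 0

/-- The points of projective space at which the hypersurface `f = 0` is singular. -/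
def singularLocus {σ K : Type*} [Field K] (f : MvPolynomial σ K) :
    Set (Projectivization K (σ → K)) :=
  {p | ∃ (x : σ → K) (hx : x ≠ 0), Projectivization.mk K x hx = p ∧ IsSingularAt f x}

section Singular

variable {σ R ι : Type*} [CommSemiring R] {f g : MvPolynomial σ R} {x : σ → R}

lemma eval_pderiv_mul (i : σ) :
    eval x (pderiv i (f * g)) =
      eval x (pderiv i f) * eval x g + eval x f * eval x (pderiv i g) := by
  rw [pderiv_mul, map_add, map_mul, map_mul]

lemma sum_mul_eval_pderiv_of_isHomogeneous [Fintype σ] {n : ℕ}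
    (hf : f.IsHomogeneous n) (x : σ → R) :
    ∑ i, x i * eval x (pderiv i f) = n * eval x f := by
  simpa [map_sum] using congrArg (eval x) hf.sum_X_mul_pderiv

lemma IsSingularAt.eval_eq_zero [Finite σ] [NoZeroDivisors R] [CharZero R] {n : ℕ}
    (h : IsSingularAt f x) (hf : f.IsHomogeneous n) (hn : n ≠ 0) : eval x f = 0 := by
  have := Fintype.ofFinite σ
  have euler := sum_mul_eval_pderiv_of_isHomogeneous hf x
  simp only [h _, mul_zero, Finset.sum_const_zero] at euler
  exact (mul_eq_zero.mp euler.symm).resolve_left (Nat.cast_ne_zero.mpr hn)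

lemma isSingularAt_mul_of_eval_eq_zero (hf : eval x f = 0) (hg : eval x g = 0) :
    IsSingularAt (f * g) x := fun i ↦ by
  rw [eval_pderiv_mul, hf, hg, mul_zero, zero_mul, add_zero]

lemma isSingularAt_mul_iff_left [NoZeroDivisors R] (hf : eval x f = 0) (hg : eval x g ≠ 0) :
    IsSingularAt (f * g) x ↔ IsSingularAt f x := by
  simp [IsSingularAt, hf, hg]

lemma isSingularAt_sub_pow_iff {R : Type*} [CommRing R] {f g : MvPolynomial σ R} {x : σ → R}
    {n : ℕ} (hn : 2 ≤ n) (hg : eval x g = 0) :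
    IsSingularAt (f - g ^ n) x ↔ IsSingularAt f x := by
  have hg' : eval x g ^ (n - 1) = 0 := by rw [hg, zero_pow (by omega)]
  simp [IsSingularAt, hg']

lemma eval_eq_zero_and_isSingularAt_prod_iff [NoZeroDivisors R] [Nontrivial R] {s : Finset ι}
    {f : ι → MvPolynomial σ R} (hsmooth : ∀ i ∈ s, ¬IsSingularAt (f i) x) :
    eval x (∏ i ∈ s, f i) = 0 ∧ IsSingularAt (∏ i ∈ s, f i) x ↔
      ∃ i ∈ s, ∃ j ∈ s, i ≠ j ∧ eval x (f i) = 0 ∧ eval x (f j) = 0 := by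
  classical
  constructor
  · rintro ⟨hzero, hsing⟩
    rw [eval_prod, Finset.prod_eq_zero_iff] at hzero
    obtain ⟨i, hi, hfi⟩ := hzero
    have hrest : eval x (∏ j ∈ s.erase i, f j) = 0 := by
      by_contra hne
      rw [← Finset.mul_prod_erase s f hi, isSingularAt_mul_iff_left hfi hne] at hsing
      exact hsmooth i hi hsing
    rw [eval_prod, Finset.prod_eq_zero_iff] at hrest
    obtain ⟨j, hj, hfj⟩ := hrest
    exact ⟨i, hi, j, Finset.mem_of_mem_erase hj, (Finset.ne_of_mem_erase hj).symm, hfi, hfj⟩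
  · rintro ⟨i, hi, j, hj, hij, hfi, hfj⟩
    have hrest : eval x (∏ k ∈ s.erase i, f k) = 0 := by
      rw [eval_prod]
      exact Finset.prod_eq_zero (Finset.mem_erase.mpr ⟨hij.symm, hj⟩) hfj
    rw [← Finset.mul_prod_erase s f hi, map_mul, hfi, zero_mul]
    exact ⟨rfl, isSingularAt_mul_of_eval_eq_zero hfi hrest⟩

end Singular

section Segre

variable {K : Type*}

/-- The determinant of two vectors of the plane, which vanishes iff they are proportional. As a
function of `s` it is the linear form on the projective line with zero `p`. -/
def wedge [CommRing K] (p s : Fin 2 → K) : K := p 1 * s 0 - p 0 * s 1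

/-- The Segre map `ℙ¹ × ℙ¹ → ℙ³` on representatives, with coordinates ordered such that its image
is the quadric `y₀ y₁ = y₂ y₃`. -/
def segre [Mul K] (s t : Fin 2 → K) : Fin 4 → K :=
  ![s 0 * t 0, s 1 * t 1, s 0 * t 1, s 1 * t 0]

lemma segre_smul_smul [CommSemiring K] (a b : K) (s t : Fin 2 → K) :
    segre (a • s) (b • t) = (a * b) • segre s t := by
  ext i
  fin_cases i <;> simp [segre, mul_mul_mul_comm]

lemma segre_ne_zero_iff [MulZeroClass K] [NoZeroDivisors K] {s t : Fin 2 → K} :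
    segre s t ≠ 0 ↔ s ≠ 0 ∧ t ≠ 0 := by
  simp only [segre, ne_eq, funext_iff, Fin.forall_fin_succ, IsEmpty.forall_iff, and_true,
    Matrix.cons_val_zero, Matrix.cons_val_succ, Pi.zero_apply, mul_eq_zero, Fin.succ_zero_eq_one]
  grind

lemma wedge_eq_zero_of_segre_eq_smul [CommRing K] [NoZeroDivisors K] {s t s' t' : Fin 2 → K}
    {a : K} (hs : s ≠ 0) (ht : t ≠ 0) (h : segre s t = a • segre s' t') :
    wedge s s' = 0 ∧ wedge t t' = 0 := by
  have h00 : s 0 * t 0 = a * (s' 0 * t' 0) := congrFun h 0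
  have h11 : s 1 * t 1 = a * (s' 1 * t' 1) := congrFun h 1
  have h01 : s 0 * t 1 = a * (s' 0 * t' 1) := congrFun h 2
  have h10 : s 1 * t 0 = a * (s' 1 * t' 0) := congrFun h 3
  rw [Function.ne_iff, Fin.exists_fin_two] at hs ht
  constructor
  · rcases ht with ht | ht <;> refine (mul_eq_zero.mp ?_).resolve_right ht
    · rw [wedge]; linear_combination s' 0 * h10 - s' 1 * h00
    · rw [wedge]; linear_combination s' 0 * h11 - s' 1 * h01
  · rcases hs with hs | hs <;> refine (mul_eq_zero.mp ?_).resolve_right hs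
    · rw [wedge]; linear_combination t' 0 * h01 - t' 1 * h00
    · rw [wedge]; linear_combination t' 0 * h11 - t' 1 * h10

variable [Field K]

lemma exists_eq_smul_of_wedge_eq_zero {p s : Fin 2 → K} (hp : p ≠ 0) (h : wedge p s = 0) :
    ∃ a : K, s = a • p := by
  rw [wedge, sub_eq_zero] at h
  by_cases h0 : p 0 = 0
  · have h1 : p 1 ≠ 0 := fun h1 ↦ hp (by ext i; fin_cases i <;> assumption)
    refine ⟨s 1 / p 1, ?_⟩
    ext i
    fin_cases i <;> simp_all
  · refine ⟨s 0 / p 0, ?_⟩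
    ext i
    fin_cases i
    · simp [h0]
    · change s 1 = s 0 / p 0 * p 1
      field_simp
      linear_combination -h

lemma exists_segre_eq {x : Fin 4 → K} (hx : x 0 * x 1 = x 2 * x 3) : ∃ s t, x = segre s t := by
  by_cases h0 : x 0 = 0
  · rcases mul_eq_zero.mp (show x 2 * x 3 = 0 by rw [← hx, h0, zero_mul]) with h | h
    · exact ⟨![0, 1], ![x 3, x 1], by ext i; fin_cases i <;> simp [segre, h0, h]⟩
    · exact ⟨![x 2, x 1], ![0, 1], by ext i; fin_cases i <;> simp [segre, h0, h]⟩
  · refine ⟨![x 0, x 3], ![1, x 2 / x 0], ?_⟩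
    ext i
    fin_cases i <;> simp [segre] <;> field_simp
    linear_combination hx

lemma exists_segre_symm_eq [IsAlgClosed K] [NeZero (2 : K)] (x : Fin 4 → K) :
    ∃ s t, segre s t 0 = x 0 ∧ segre s t 1 = x 1 ∧
      segre s t 2 + segre s t 3 = x 2 + x 3 := by
  have h2 : (2 : K) ≠ 0 := NeZero.ne 2
  obtain ⟨v, hv⟩ := IsAlgClosed.exists_pow_nat_eq ((x 2 + x 3) ^ 2 - 4 * (x 0 * x 1)) two_pos
  obtain ⟨s, t, hst⟩ := exists_segre_eq
    (x := ![x 0, x 1, (x 2 + x 3 + v) / 2, (x 2 + x 3 - v) / 2]) (by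
      simp only [Matrix.cons_val]
      field_simp
      linear_combination hv)
  refine ⟨s, t, ?_⟩
  rw [← hst]
  refine ⟨rfl, rfl, ?_⟩
  simp only [Matrix.cons_val]
  field_simp
  ring

end Segre

/-! ### Points on the quadric -/

namespace Sextic9

/-- The coefficients of the linear forms `F₁, …, F₆`. -/
def coeffF : Matrix (Fin 6) (Fin 4) ℂ :=
  !![1, 0, 0, 0; 0, 1, 0, 0; 4, 1, -2, -2; 1, 4, -2, -2; 1, 1, 1, 1; 1, 1, -1, -1]

lemma polyF_eq_sum (k : Fin 6) : polyF k = ∑ j, C (coeffF k j) * X j := by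
  have h2 : (C 2 : MvPolynomial (Fin 4) ℂ) = 2 := rfl
  have h4 : (C 4 : MvPolynomial (Fin 4) ℂ) = 4 := rfl
  fin_cases k <;> simp [polyF, coeffF, Fin.sum_univ_four, h2, h4] <;> ring

lemma isHomogeneous_polyF (k : Fin 6) : (polyF k).IsHomogeneous 1 := by
  rw [polyF_eq_sum]
  exact .sum _ _ _ fun j _ ↦ isHomogeneous_C_mul_X _ _

lemma eval_polyF (k : Fin 6) (x : Fin 4 → ℂ) : eval x (polyF k) = ∑ j, coeffF k j * x j := by
  simp [polyF_eq_sum]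

lemma eval_pderiv_polyF (k : Fin 6) (j : Fin 4) (x : Fin 4 → ℂ) :
    eval x (pderiv j (polyF k)) = coeffF k j := by
  simp [polyF_eq_sum, pderiv_X, Pi.single_apply]

lemma isHomogeneous_polyS : polyS.IsHomogeneous 2 :=
  ((isHomogeneous_X ℂ 0).mul (isHomogeneous_X ℂ 1)).sub
    ((isHomogeneous_X ℂ 2).mul (isHomogeneous_X ℂ 3))

lemma eval_polyS (x : Fin 4 → ℂ) : eval x polyS = x 0 * x 1 - x 2 * x 3 := by
  simp [polyS]

lemma eval_pderiv_polyS (i : Fin 4) (x : Fin 4 → ℂ) :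
    eval x (pderiv i polyS) = ![x 1, x 0, -x 3, -x 2] i := by
  fin_cases i <;> simp [polyS, pderiv_X]

lemma pderiv_polyS56 (i : Fin 4) :
    pderiv i polyS56 = pderiv i (polyF 4 * polyF 5) + 2 * pderiv i polyS := by
  rw [polyS56, two_mul, map_add, map_add, two_mul]

lemma isHomogeneous_polyS56 : polyS56.IsHomogeneous 2 :=
  ((isHomogeneous_polyF 4).mul (isHomogeneous_polyF 5)).add
    (isHomogeneous_polyS.C_mul 2)

/-- The smooth surfaces `F₁, F₂, F₃, F₄, S₅,₆` whose product is the first term of the sextic. -/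
noncomputable def smoothFactor : Fin 5 → MvPolynomial (Fin 4) ℂ :=
  ![polyF 0, polyF 1, polyF 2, polyF 3, polyS56]

/-- The index of the smooth factor whose restriction to the quadric `S = 0` is divisible by
`F_{k+1}`: the forms `F₅` and `F₆` share the factor `S₅,₆`, which restricts to `F₅F₆`. -/
def factorIndex : Fin 6 → Fin 5 := ![0, 1, 2, 3, 4, 4]

lemma polySextic9_eq : polySextic9 = ∏ i, smoothFactor i - polyS ^ 3 := by
  simp [polySextic9, smoothFactor, Fin.prod_univ_five]

lemma isHomogeneous_prod_smoothFactor : (∏ i, smoothFactor i).IsHomogeneous 6 := by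
  rw [Fin.prod_univ_five]
  exact ((((isHomogeneous_polyF 0).mul (isHomogeneous_polyF 1)).mul (isHomogeneous_polyF 2)).mul
    (isHomogeneous_polyF 3)).mul isHomogeneous_polyS56

lemma isHomogeneous_polySextic9 : polySextic9.IsHomogeneous 6 := by
  rw [polySextic9_eq]
  exact isHomogeneous_prod_smoothFactor.sub (isHomogeneous_polyS.pow 3)

lemma not_isSingularAt_polyF (k : Fin 6) (x : Fin 4 → ℂ) : ¬IsSingularAt (polyF k) x := by
  intro h
  simp only [IsSingularAt, eval_pderiv_polyF] at h
  fin_cases k <;> simp [coeffF, Fin.forall_fin_succ] at h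

lemma not_isSingularAt_polyS56 {x : Fin 4 → ℂ} (hx : x ≠ 0) : ¬IsSingularAt polyS56 x := by
  intro h
  apply hx
  have h0 := h 0
  have h1 := h 1
  have h2 := h 2
  have h3 := h 3
  simp only [pderiv_polyS56, map_add, map_mul, map_ofNat, eval_pderiv_mul, eval_pderiv_polyF,
    eval_pderiv_polyS, eval_polyF, coeffF, Fin.sum_univ_four, Matrix.of_apply,
    Matrix.cons_val] at h0 h1 h2 h3
  ext i
  fin_cases i <;> dsimp
  · linear_combination (2 * h1 - h0) / 6
  · linear_combination (2 * h0 - h1) / 6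
  · linear_combination (h2 - 2 * h3) / 6
  · linear_combination (h3 - 2 * h2) / 6

lemma not_isSingularAt_smoothFactor {x : Fin 4 → ℂ} (hx : x ≠ 0) (i : Fin 5) :
    ¬IsSingularAt (smoothFactor i) x := by
  fin_cases i
  exacts [not_isSingularAt_polyF 0 x, not_isSingularAt_polyF 1 x, not_isSingularAt_polyF 2 x,
    not_isSingularAt_polyF 3 x, not_isSingularAt_polyS56 hx]

lemma eval_smoothFactor_eq_zero_iff {x : Fin 4 → ℂ} (hS : eval x polyS = 0) (i : Fin 5) :
    eval x (smoothFactor i) = 0 ↔ ∃ k, factorIndex k = i ∧ eval x (polyF k) = 0 := by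
  fin_cases i <;> simp [smoothFactor, factorIndex, polyS56, hS, Fin.exists_fin_succ]

lemma isSingularAt_iff_of_eval_polyS_eq_zero {x : Fin 4 → ℂ} (hx : x ≠ 0)
    (hS : eval x polyS = 0) :
    IsSingularAt polySextic9 x ↔
      ∃ k l, factorIndex k ≠ factorIndex l ∧ eval x (polyF k) = 0 ∧ eval x (polyF l) = 0 := by
  have h_smooth (i : Fin 5) (_ : i ∈ Finset.univ) := not_isSingularAt_smoothFactor hx i
  have h_zero (h : IsSingularAt (∏ i, smoothFactor i) x) : eval x (∏ i, smoothFactor i) = 0 :=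
    h.eval_eq_zero isHomogeneous_prod_smoothFactor (by norm_num)
  rw [polySextic9_eq, isSingularAt_sub_pow_iff (by norm_num) hS, ← and_iff_right_of_imp h_zero,
    eval_eq_zero_and_isSingularAt_prod_iff h_smooth]
  simp only [Finset.mem_univ, true_and, eval_smoothFactor_eq_zero_iff hS]
  aesop

/-- Coordinates of the six points of `ℙ¹` such that the plane `F_{k+1} = 0` is the tangent plane
of the quadric at the point `segre (point k) (point k)` of its diagonal conic. -/
def point : Fin 6 → Fin 2 → ℂ := ![![0, 1], ![1, 0], ![1, 2], ![2, 1], ![-1, 1], ![1, 1]]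

lemma point_ne_zero (k : Fin 6) : point k ≠ 0 := by
  simp only [ne_eq, funext_iff, Fin.forall_fin_two]
  fin_cases k <;> simp [point]

lemma wedge_point_eq_zero_iff {k l : Fin 6} : wedge (point k) (point l) = 0 ↔ k = l := by
  fin_cases k <;> fin_cases l <;> simp [wedge, point] <;> norm_num

lemma eval_polyF_segre (k : Fin 6) (s t : Fin 2 → ℂ) :
    eval (segre s t) (polyF k) = wedge (point k) s * wedge (point k) t := by
  fin_cases k <;> simp [polyF, point, wedge, segre] <;> ring

lemma eval_polyS_segre (s t : Fin 2 → ℂ) : eval (segre s t) polyS = 0 := by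
  simp [eval_polyS, segre]
  ring

/-- The point `(point k, point l)` of `ℙ¹ × ℙ¹`, seen on the quadric. -/
noncomputable def node (p : Fin 6 × Fin 6) : Fin 4 → ℂ := segre (point p.1) (point p.2)

lemma node_ne_zero (p : Fin 6 × Fin 6) : node p ≠ 0 :=
  segre_ne_zero_iff.mpr ⟨point_ne_zero p.1, point_ne_zero p.2⟩

/-- The ordered pairs of lines, one from each ruling, lying on different smooth factors. -/
def nodeIndices : Finset (Fin 6 × Fin 6) := {p | factorIndex p.1 ≠ factorIndex p.2}

lemma card_nodeIndices : nodeIndices.card = 28 := by decide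

lemma isSingularAt_node {p : Fin 6 × Fin 6} (hp : p ∈ nodeIndices) :
    IsSingularAt polySextic9 (node p) := by
  rw [isSingularAt_iff_of_eval_polyS_eq_zero (node_ne_zero p) (eval_polyS_segre _ _)]
  refine ⟨p.1, p.2, (Finset.mem_filter.mp hp).2, ?_, ?_⟩
  · rw [node, eval_polyF_segre, wedge_point_eq_zero_iff.mpr rfl, zero_mul]
  · rw [node, eval_polyF_segre, wedge_point_eq_zero_iff.mpr rfl, mul_zero]

lemma eq_of_node_eq_smul {p q : Fin 6 × Fin 6} {a : ℂ} (h : node p = a • node q) : p = q := by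
  obtain ⟨h1, h2⟩ := wedge_eq_zero_of_segre_eq_smul (point_ne_zero p.1) (point_ne_zero p.2) h
  exact Prod.ext (wedge_point_eq_zero_iff.mp h1) (wedge_point_eq_zero_iff.mp h2)

lemma eq_of_wedge_point_eq_zero {k l : Fin 6} {s : Fin 2 → ℂ} (hs : s ≠ 0)
    (hk : wedge (point k) s = 0) (hl : wedge (point l) s = 0) : k = l := by
  obtain ⟨a, rfl⟩ := exists_eq_smul_of_wedge_eq_zero (point_ne_zero k) hk
  have ha : a ≠ 0 := left_ne_zero_of_smul hs
  have hlk : a * wedge (point l) (point k) = 0 := by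
    rw [← hl]
    simp only [wedge, Pi.smul_apply, smul_eq_mul]
    ring
  exact (wedge_point_eq_zero_iff.mp ((mul_eq_zero.mp hlk).resolve_left ha)).symm

lemma exists_segre_eq_smul_node {k l : Fin 6} {s t : Fin 2 → ℂ}
    (hkl : factorIndex k ≠ factorIndex l) (hk : wedge (point k) s = 0)
    (hl : wedge (point l) t = 0) : ∃ p ∈ nodeIndices, ∃ a : ℂ, segre s t = a • node p := by
  obtain ⟨a, rfl⟩ := exists_eq_smul_of_wedge_eq_zero (point_ne_zero k) hk
  obtain ⟨b, rfl⟩ := exists_eq_smul_of_wedge_eq_zero (point_ne_zero l) hl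
  exact ⟨(k, l), Finset.mem_filter.mpr ⟨Finset.mem_univ _, hkl⟩, a * b, segre_smul_smul ..⟩

lemma exists_eq_smul_node {x : Fin 4 → ℂ} (hx : x ≠ 0) (hS : eval x polyS = 0)
    (h : IsSingularAt polySextic9 x) : ∃ p ∈ nodeIndices, ∃ a : ℂ, x = a • node p := by
  obtain ⟨s, t, rfl⟩ := exists_segre_eq (sub_eq_zero.mp (eval_polyS x ▸ hS))
  obtain ⟨hs, ht⟩ := segre_ne_zero_iff.mp hx
  obtain ⟨k, l, hkl, hk, hl⟩ := (isSingularAt_iff_of_eval_polyS_eq_zero hx hS).mp h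
  rw [eval_polyF_segre, mul_eq_zero] at hk hl
  have hne : k ≠ l := fun h ↦ hkl (congrArg factorIndex h)
  rcases hk with hks | hkt <;> rcases hl with hls | hlt
  · exact absurd (eq_of_wedge_point_eq_zero hs hks hls) hne
  · exact exists_segre_eq_smul_node hkl hks hlt
  · exact exists_segre_eq_smul_node hkl.symm hls hkt
  · exact absurd (eq_of_wedge_point_eq_zero ht hkt hlt) hne

/-! ### No singular points off the quadric -/

/-- The product `F₁F₂F₃F₄` of the planes. -/
noncomputable def quarticF : MvPolynomial (Fin 4) ℂ := polyF 0 * polyF 1 * polyF 2 * polyF 3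

/-- The product `F₅F₆` of the planes. -/
noncomputable def quadricF : MvPolynomial (Fin 4) ℂ := polyF 4 * polyF 5

lemma eval_quarticF (x : Fin 4 → ℂ) : eval x quarticF =
    eval x (polyF 0) * eval x (polyF 1) * eval x (polyF 2) * eval x (polyF 3) := by
  simp only [quarticF, map_mul]

lemma eval_quadricF (x : Fin 4 → ℂ) :
    eval x quadricF = eval x (polyF 4) * eval x (polyF 5) :=
  map_mul ..

lemma eval_polySextic9 (x : Fin 4 → ℂ) : eval x polySextic9 =
    eval x quarticF * (eval x quadricF + 2 * eval x polyS) - eval x polyS ^ 3 := by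
  simp [polySextic9, polyS56, quarticF, quadricF]

lemma eval_pderiv_polySextic9 (i : Fin 4) (x : Fin 4 → ℂ) :
    eval x (pderiv i polySextic9) =
      (eval x quadricF + 2 * eval x polyS) * eval x (pderiv i quarticF) +
        eval x quarticF * eval x (pderiv i quadricF) +
        (2 * eval x quarticF - 3 * eval x polyS ^ 2) * eval x (pderiv i polyS) := by
  have h : polySextic9 = quarticF * polyS56 - polyS ^ 3 := rfl
  have h' : polyS56 = quadricF + 2 * polyS := rfl
  rw [h, map_sub, map_sub, eval_pderiv_mul, pderiv_polyS56, h', pderiv_pow]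
  simp only [map_add, map_mul, map_ofNat, map_pow, map_natCast, quadricF]
  push_cast
  ring

lemma eval_pderiv_quarticF (i : Fin 4) (x : Fin 4 → ℂ) :
    eval x (pderiv i quarticF) =
      coeffF 0 i * (eval x (polyF 1) * eval x (polyF 2) * eval x (polyF 3)) +
      coeffF 1 i * (eval x (polyF 0) * eval x (polyF 2) * eval x (polyF 3)) +
      coeffF 2 i * (eval x (polyF 0) * eval x (polyF 1) * eval x (polyF 3)) +
      coeffF 3 i * (eval x (polyF 0) * eval x (polyF 1) * eval x (polyF 2)) := by
  simp only [quarticF, eval_pderiv_mul, eval_pderiv_polyF, map_mul]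
  ring

lemma eval_pderiv_quadricF (i : Fin 4) (x : Fin 4 → ℂ) :
    eval x (pderiv i quadricF) =
      coeffF 4 i * eval x (polyF 5) + coeffF 5 i * eval x (polyF 4) := by
  simp only [quadricF, eval_pderiv_mul, eval_pderiv_polyF]
  ring

lemma coeffF_two_eq_three (k : Fin 6) : coeffF k 2 = coeffF k 3 := by
  fin_cases k <;> rfl

section OffDiagonal

variable {x : Fin 4 → ℂ}

lemma two_mul_eval_quarticF (h : IsSingularAt polySextic9 x) (hx : x 2 ≠ x 3) :
    2 * eval x quarticF = 3 * eval x polyS ^ 2 := by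
  have h2 := h 2
  have h3 := h 3
  rw [eval_pderiv_polySextic9, eval_pderiv_quarticF, eval_pderiv_quadricF,
    eval_pderiv_polyS] at h2 h3
  simp only [coeffF_two_eq_three] at h2
  have hprod : (2 * eval x quarticF - 3 * eval x polyS ^ 2) * (x 2 - x 3) = 0 := by
    simp only [Matrix.cons_val] at h2 h3
    linear_combination h2 - h3
  exact sub_eq_zero.mp ((mul_eq_zero.mp hprod).resolve_right (sub_ne_zero.mpr hx))

lemma four_mul_eval_polyS (h : IsSingularAt polySextic9 x) (hx : x 2 ≠ x 3)
    (hS : eval x polyS ≠ 0) : 4 * eval x polyS = -3 * eval x quadricF := by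
  have hM := two_mul_eval_quarticF h hx
  have hG := h.eval_eq_zero isHomogeneous_polySextic9 (by norm_num)
  rw [eval_polySextic9] at hG
  apply mul_left_cancel₀ (pow_ne_zero 2 hS)
  linear_combination 2 * hG - (eval x quadricF + 2 * eval x polyS) * hM

lemma eval_quadricF_mul_eval_pderiv_quarticF (h : IsSingularAt polySextic9 x) (hx : x 2 ≠ x 3)
    (hS : eval x polyS ≠ 0) (i : Fin 4) :
    eval x quadricF * eval x (pderiv i quarticF) =
      2 * (eval x quarticF * eval x (pderiv i quadricF)) := by
  have hM := two_mul_eval_quarticF h hx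
  have hB := four_mul_eval_polyS h hx hS
  have hi := h i
  rw [eval_pderiv_polySextic9] at hi
  linear_combination -2 * hi + eval x (pderiv i quarticF) * hB + 2 * eval x (pderiv i polyS) * hM

end OffDiagonal

lemma eval_polyF_congr {x y : Fin 4 → ℂ} (h0 : x 0 = y 0) (h1 : x 1 = y 1)
    (h23 : x 2 + x 3 = y 2 + y 3) (k : Fin 6) : eval x (polyF k) = eval y (polyF k) := by
  simp only [eval_polyF, Fin.sum_univ_four, coeffF_two_eq_three, h0, h1]
  linear_combination coeffF k 3 * h23

/-- The binary quartic `f` with `F₁F₂F₃F₄ = f(s) f(t)` on the Segre parametrization. -/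
def binaryQuartic (s : Fin 2 → ℂ) : ℂ :=
  wedge (point 0) s * wedge (point 1) s * wedge (point 2) s * wedge (point 3) s

/-- The binary quadratic form `g` with `F₅F₆ = g(s) g(t)` on the Segre parametrization. -/
def binaryQuadratic (s : Fin 2 → ℂ) : ℂ := wedge (point 4) s * wedge (point 5) s

lemma binaryQuartic_apply (s : Fin 2 → ℂ) :
    binaryQuartic s = -(s 0 * s 1 * (2 * s 0 - s 1) * (s 0 - 2 * s 1)) := by
  simp [binaryQuartic, wedge, point]

lemma binaryQuadratic_apply (s : Fin 2 → ℂ) : binaryQuadratic s = s 0 ^ 2 - s 1 ^ 2 := by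
  simp [binaryQuadratic, wedge, point]
  ring

section Factored

variable {x : Fin 4 → ℂ} {s t : Fin 2 → ℂ}

lemma eval_quarticF_eq_mul
    (hF : ∀ k, eval x (polyF k) = wedge (point k) s * wedge (point k) t) :
    eval x quarticF = binaryQuartic s * binaryQuartic t := by
  simp only [eval_quarticF, binaryQuartic, hF]
  ring

lemma eval_quadricF_eq_mul
    (hF : ∀ k, eval x (polyF k) = wedge (point k) s * wedge (point k) t) :
    eval x quadricF = binaryQuadratic s * binaryQuadratic t := by
  simp only [eval_quadricF, binaryQuadratic, hF]
  ring

lemma critical_of_eval_pderiv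
    (hF : ∀ k, eval x (polyF k) = wedge (point k) s * wedge (point k) t)
    (hM : eval x quarticF ≠ 0) (hB : eval x quadricF ≠ 0)
    (h : ∀ i, eval x quadricF * eval x (pderiv i quarticF) =
      2 * (eval x quarticF * eval x (pderiv i quadricF))) :
    (s 0 ^ 2 - s 0 * s 1 + s 1 ^ 2) * (s 0 ^ 2 - 4 * s 0 * s 1 + s 1 ^ 2) = 0 := by
  rw [eval_quarticF_eq_mul hF] at hM
  rw [eval_quadricF_eq_mul hF] at hB
  have hs1 : s 1 ≠ 0 := by
    intro hs1
    exact hM (by simp [binaryQuartic_apply, hs1])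
  have hne : 2 * s 1 * binaryQuartic t * binaryQuadratic t ≠ 0 :=
    mul_ne_zero (mul_ne_zero (mul_ne_zero two_ne_zero hs1) (right_ne_zero_of_mul hM))
      (right_ne_zero_of_mul hB)
  refine (mul_eq_zero.mp ?_).resolve_left hne
  have h0 := h 0
  have h2 := h 2
  rw [eval_quarticF_eq_mul hF, eval_quadricF_eq_mul hF, eval_pderiv_quarticF,
    eval_pderiv_quadricF] at h0 h2
  simp only [hF, point, wedge, coeffF, binaryQuartic_apply, binaryQuadratic_apply,
    Matrix.of_apply, Matrix.cons_val] at h0 h2 ⊢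
  -- Along the Segre parametrization `∂/∂s₀ = t₀ ∂₀ + t₁ ∂₂`.
  linear_combination t 0 * h0 + t 1 * h2

end Factored

-- The hypothesis is the vanishing of the derivative of `f / g ^ 2`, up to a nonzero factor.
lemma binaryQuartic_eq_of_critical {s : Fin 2 → ℂ}
    (h : (s 0 ^ 2 - s 0 * s 1 + s 1 ^ 2) * (s 0 ^ 2 - 4 * s 0 * s 1 + s 1 ^ 2) = 0) :
    binaryQuartic s = -binaryQuadratic s ^ 2 ∨ 4 * binaryQuartic s = -binaryQuadratic s ^ 2 := by
  rw [binaryQuartic_apply, binaryQuadratic_apply]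
  rcases mul_eq_zero.mp h with h | h
  · left
    linear_combination (s 0 ^ 2 - s 0 * s 1 + s 1 ^ 2) * h
  · right
    linear_combination (s 0 ^ 2 - 4 * s 0 * s 1 + s 1 ^ 2) * h

lemma eval_polyS_eq_zero_of_isSingularAt_of_ne {x : Fin 4 → ℂ} (h : IsSingularAt polySextic9 x)
    (hx : x 2 ≠ x 3) : eval x polyS = 0 := by
  by_contra hS
  have hMS := two_mul_eval_quarticF h hx
  have hSB := four_mul_eval_polyS h hx hS
  have hM : eval x quarticF ≠ 0 := by
    refine right_ne_zero_of_mul (a := 2) ?_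
    rw [hMS]
    exact mul_ne_zero three_ne_zero (pow_ne_zero 2 hS)
  have hB : eval x quadricF ≠ 0 := by
    refine right_ne_zero_of_mul (a := -3) ?_
    rw [← hSB]
    exact mul_ne_zero (by norm_num) hS
  obtain ⟨s, t, h0, h1, h23⟩ := exists_segre_symm_eq x
  have hF (k : Fin 6) : eval x (polyF k) = wedge (point k) s * wedge (point k) t := by
    rw [← eval_polyF_segre, eval_polyF_congr h0.symm h1.symm h23.symm]
  have hcrit := eval_quadricF_mul_eval_pderiv_quarticF h hx hS
  have hs := binaryQuartic_eq_of_critical (critical_of_eval_pderiv hF hM hB hcrit)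
  have ht := binaryQuartic_eq_of_critical
    (critical_of_eval_pderiv (fun k ↦ (hF k).trans (mul_comm _ _)) hM hB hcrit)
  have hMB : 32 * eval x quarticF = 27 * eval x quadricF ^ 2 := by
    linear_combination 16 * hMS + 3 * (4 * eval x polyS - 3 * eval x quadricF) * hSB
  apply hB
  rw [eval_quarticF_eq_mul hF, eval_quadricF_eq_mul hF] at hMB
  rw [← sq_eq_zero_iff, eval_quadricF_eq_mul hF]
  set f := binaryQuartic s
  set f' := binaryQuartic t
  set g := binaryQuadratic s
  set g' := binaryQuadratic t
  rcases hs with hs | hs <;> rcases ht with ht | ht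
  · linear_combination (hMB - 32 * f' * hs + 32 * g ^ 2 * ht) / 5
  · linear_combination (-hMB + 32 * f' * hs - 8 * g ^ 2 * ht) / 19
  · linear_combination (-hMB + 8 * f' * hs - 8 * g ^ 2 * ht) / 19
  · linear_combination (-hMB + 8 * f' * hs - 2 * g ^ 2 * ht) / 25

section CriticalValues

variable {K : Type*} [Field K] [CharZero K] {e r n m T Q : K}

-- Eliminating `n` from the two critical equations leaves a binary quartic in `e` and `r`.
lemma eq_or_eq_or_of_critical (hm : m = n + r ^ 2) (hT : T = (2 * e - 5 * r) ^ 2 + 9 * n)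
    (hQ : Q = e ^ 2 - 4 * r ^ 2 + 2 * n)
    (he : 2 * (2 * e - 5 * r) * Q + e * T = 0) (hr : 2 * r * Q + (5 * e - 8 * r) * m = 0) :
    e = r ∨ e = 4 * r ∨ 5 * e ^ 2 = 2 * e * r + 15 * r ^ 2 := by
  have helim : (e - r) * ((e - 4 * r) * (5 * e ^ 2 - (2 * e * r + 15 * r ^ 2))) = 0 := by
    subst hm hT hQ
    linear_combination ((5 * e - 4 * r) * he - (17 * e - 20 * r) * hr) / 8
  simpa [sub_eq_zero] using helim

lemma mul_eq_neg_of_mul_eq (hm : m = n + r ^ 2) (hT : T = (2 * e - 5 * r) ^ 2 + 9 * n)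
    (hQ : Q = e ^ 2 - 4 * r ^ 2 + 2 * n) (hquad : 5 * e ^ 2 = 2 * e * r + 15 * r ^ 2)
    (hn : r * (2 * e - 5 * r) = 5 * n) : m * T * Q = -36 * n ^ 3 := by
  have her : 2 * e * r = 5 * m := by linear_combination hn - 5 * hm
  have hQn : Q = 3 * n := by linear_combination hQ + (hquad + her) / 5 + hm
  have hsq : (2 * e - 5 * r) ^ 2 = -46 * n - 9 * r ^ 2 := by
    linear_combination 4 / 5 * hquad - 46 / 5 * her - 46 * hm
  have hmT : m * T = -12 * n ^ 2 := by
    rw [hm, hT, hsq]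
    linear_combination (r * (2 * e - 5 * r) + 5 * n) * hn - r ^ 2 * hsq
  rw [hmT, hQn]
  ring

lemma mul_eq_of_critical (hm : m = n + r ^ 2) (hT : T = (2 * e - 5 * r) ^ 2 + 9 * n)
    (hQ : Q = e ^ 2 - 4 * r ^ 2 + 2 * n)
    (he : 2 * (2 * e - 5 * r) * Q + e * T = 0) (hr : 2 * r * Q + (5 * e - 8 * r) * m = 0) :
    m * T * Q = 18 * n ^ 3 ∨ 27 * (m * T * Q) = 500 * n ^ 3 ∨
      27 * (m * T * Q) = -250 * n ^ 3 ∨ m * T * Q = -36 * n ^ 3 := by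
  have h_origin (he0 : e = 0) (hr0 : r = 0) : m * T * Q = 18 * n ^ 3 := by
    rw [hm, hT, hQ, he0, hr0]
    ring
  rcases eq_or_eq_or_of_critical hm hT hQ he hr with rfl | rfl | hquad
  · have hn : e * (n - 9 * e ^ 2) = 0 := by
      subst hm hQ
      linear_combination hr
    rcases mul_eq_zero.mp hn with h0 | hn
    · exact .inl (h_origin h0 h0)
    · right; left
      rw [hm, hT, hQ, sub_eq_zero.mp hn]
      ring
  · have hn : r * (9 * r ^ 2 + 4 * n) = 0 := by
      subst hm hQ
      linear_combination hr / 4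
    rcases mul_eq_zero.mp hn with h0 | hn
    · exact .inl (h_origin (by rw [h0, mul_zero]) h0)
    · right; right; left
      rw [hm, hT, hQ, show n = -(9 / 4) * r ^ 2 by linear_combination hn / 4]
      ring
  · have hprod : (5 * e - 4 * r) * (r * (2 * e - 5 * r) - 5 * n) = 0 := by
      subst hm hQ
      linear_combination 4 * r * hquad - 5 * hr
    rcases mul_eq_zero.mp hprod with h45 | hn
    · have hr0 : r ^ 2 = 0 := by
        linear_combination (5 * e + 2 * r) / 67 * h45 - 5 / 67 * hquad
      have hr0 : r = 0 := pow_eq_zero_iff two_ne_zero |>.mp hr0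
      exact .inl (h_origin (by linear_combination h45 / 5 + 4 / 5 * hr0) hr0)
    · exact .inr (.inr (.inr (mul_eq_neg_of_mul_eq hm hT hQ hquad (sub_eq_zero.mp hn))))

end CriticalValues

section Diagonal

variable {a b r e n m T Q y : ℂ}

-- In terms of `e = y₀ + y₁`, `r` and `n = S`, the sextic restricts to `m * T * Q - n ^ 3` on the
-- plane `y₂ = y₃ = r`; the conclusion is the vanishing of its derivatives along `e` and `r`.
lemma critical_of_isSingularAt (h : IsSingularAt polySextic9 ![a, b, r, r]) (hab : a ≠ b)
    (he : e = a + b) (hn : n = a * b - r ^ 2) (hm : m = n + r ^ 2)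
    (hT : T = (2 * e - 5 * r) ^ 2 + 9 * n) (hQ : Q = e ^ 2 - 4 * r ^ 2 + 2 * n) :
    m * (2 * (2 * e - 5 * r) * Q + e * T) = 0 ∧
      r * T * Q - 5 * m * (2 * e - 5 * r) * Q - 4 * r * m * T = 0 := by
  have h0 := h 0
  have h1 := h 1
  have h2 := h 2
  simp only [eval_pderiv_polySextic9, eval_pderiv_quarticF, eval_pderiv_quadricF,
    eval_pderiv_polyS, eval_quarticF, eval_quadricF, eval_polyF, eval_polyS, coeffF,
    Fin.sum_univ_four, Matrix.of_apply, Matrix.cons_val] at h0 h1 h2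
  have hn' : T * Q + 9 * m * Q + 2 * m * T - 3 * n ^ 2 = 0 := by
    refine (mul_eq_zero.mp ?_).resolve_left (sub_ne_zero.mpr hab)
    subst hQ hT hm hn he
    linear_combination h1 - h0
  have he' : 2 * m * (2 * (2 * e - 5 * r) * Q + e * T) = 0 := by
    refine (mul_eq_zero.mp ?_).resolve_left (sub_ne_zero.mpr hab)
    subst hQ hT hm hn he
    linear_combination a * h0 - b * h1
  constructor
  · linear_combination he' / 2
  · subst hQ hT hm hn he
    linear_combination h2 + r * hn'

lemma mul_eq_pow_of_isSingularAt (h : IsSingularAt polySextic9 ![a, b, r, r]) (he : e = a + b)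
    (hn : n = a * b - r ^ 2) (hm : m = n + r ^ 2) (hT : T = (2 * e - 5 * r) ^ 2 + 9 * n)
    (hQ : Q = e ^ 2 - 4 * r ^ 2 + 2 * n) : m * T * Q = n ^ 3 := by
  have hG := h.eval_eq_zero isHomogeneous_polySextic9 (by norm_num)
  simp only [eval_polySextic9, eval_quarticF, eval_quadricF, eval_polyF, eval_polyS, coeffF,
    Fin.sum_univ_four, Matrix.of_apply, Matrix.cons_val] at hG
  subst hQ hT hm hn he
  linear_combination hG

lemma eq_zero_of_isSingularAt_of_ne (h : IsSingularAt polySextic9 ![a, b, r, r]) (hab : a ≠ b)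
    (he : e = a + b) (hn : n = a * b - r ^ 2) (hm : m = n + r ^ 2)
    (hT : T = (2 * e - 5 * r) ^ 2 + 9 * n) (hQ : Q = e ^ 2 - 4 * r ^ 2 + 2 * n) : n = 0 := by
  have hval := mul_eq_pow_of_isSingularAt h he hn hm hT hQ
  by_contra hn0
  have hmTQ : m * T * Q ≠ 0 := hval ▸ pow_ne_zero 3 hn0
  have hm0 : m ≠ 0 := left_ne_zero_of_mul (left_ne_zero_of_mul hmTQ)
  have hT0 : T ≠ 0 := right_ne_zero_of_mul (left_ne_zero_of_mul hmTQ)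
  obtain ⟨hcrit_e, hcrit_r⟩ := critical_of_isSingularAt h hab he hn hm hT hQ
  replace hcrit_e := (mul_eq_zero.mp hcrit_e).resolve_left hm0
  replace hcrit_r : 2 * r * Q + (5 * e - 8 * r) * m = 0 := by
    refine (mul_eq_zero.mp ?_).resolve_left hT0
    linear_combination 2 * hcrit_r + 5 * m * hcrit_e
  apply pow_ne_zero 3 hn0
  rcases mul_eq_of_critical hm hT hQ hcrit_e hcrit_r with hc | hc | hc | hc
  · linear_combination (hval - hc) / 17
  · linear_combination (27 * hval - hc) / 473
  · linear_combination (hc - 27 * hval) / 277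
  · linear_combination (hc - hval) / 37

lemma eq_zero_of_isSingularAt_self (h : IsSingularAt polySextic9 ![a, a, r, r])
    (hn : n = a ^ 2 - r ^ 2) (hy : y = 5 * a - 4 * r) : n = 0 := by
  have hG := h.eval_eq_zero isHomogeneous_polySextic9 (by norm_num)
  have h2 := h 2
  simp only [eval_polySextic9, eval_pderiv_polySextic9, eval_pderiv_quarticF,
    eval_pderiv_quadricF, eval_pderiv_polyS, eval_quarticF, eval_quadricF, eval_polyF, eval_polyS,
    coeffF, Fin.sum_univ_four, Matrix.of_apply, Matrix.cons_val] at hG h2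
  by_contra hn0
  have hsq : 6 * a ^ 2 * y ^ 2 = n ^ 2 := by
    apply mul_left_cancel₀ hn0
    subst hn hy
    linear_combination hG
  have hrn : r * n = 12 * a ^ 2 * y := by
    apply mul_left_cancel₀ (mul_ne_zero two_ne_zero hn0)
    have h2' : -24 * a ^ 2 * y * n - 6 * a ^ 2 * y ^ 2 * r + 3 * n ^ 2 * r = 0 := by
      subst hn hy
      linear_combination h2
    linear_combination h2' + r * hsq
  have hyr : y * r = 2 * n := by
    apply mul_left_cancel₀ hn0
    linear_combination y * hrn + 2 * hsq
  have hprod : (r - 2 * a) * (a - 2 * r) = 0 := by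
    subst hn hy
    linear_combination hyr
  apply pow_ne_zero 2 hn0
  rcases mul_eq_zero.mp hprod with hra | har
  · rw [hy, sub_eq_zero.mp hra] at hsq
    rw [hn, sub_eq_zero.mp hra] at hsq ⊢
    linear_combination hsq / 5
  · rw [hy, sub_eq_zero.mp har] at hsq
    rw [hn, sub_eq_zero.mp har] at hsq ⊢
    linear_combination hsq / 95

end Diagonal

lemma eval_polyS_eq_zero_of_isSingularAt {x : Fin 4 → ℂ} (h : IsSingularAt polySextic9 x) :
    eval x polyS = 0 := by
  by_cases h23 : x 2 = x 3
  · obtain ⟨a, b, r, rfl⟩ : ∃ a b r, x = ![a, b, r, r] :=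
      ⟨x 0, x 1, x 2, by ext i; fin_cases i <;> simp [h23]⟩
    have hn : a * b - r ^ 2 = 0 := by
      by_cases hab : a = b
      · subst hab
        exact eq_zero_of_isSingularAt_self h (by rw [sq a]) rfl
      · exact eq_zero_of_isSingularAt_of_ne h hab rfl rfl rfl rfl rfl
    simpa [eval_polyS, sq] using hn
  · exact eval_polyS_eq_zero_of_isSingularAt_of_ne h h23

/-! ### The singular locus -/

/-- The point of projective space with homogeneous coordinates `node p`. -/
noncomputable def projNode (p : Fin 6 × Fin 6) : Projectivization ℂ (Fin 4 → ℂ) :=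
  .mk ℂ (node p) (node_ne_zero p)

lemma projNode_injective : Function.Injective projNode := fun p q h ↦ by
  obtain ⟨a, ha⟩ := (Projectivization.mk_eq_mk_iff' ..).mp h
  exact eq_of_node_eq_smul ha.symm

lemma singularLocus_polySextic9 : singularLocus polySextic9 = projNode '' nodeIndices := by
  ext q
  constructor
  · rintro ⟨x, hx, rfl, h⟩
    obtain ⟨p, hp, a, rfl⟩ := exists_eq_smul_node hx (eval_polyS_eq_zero_of_isSingularAt h) h
    exact ⟨p, hp, ((Projectivization.mk_eq_mk_iff' ..).mpr ⟨a, rfl⟩).symm⟩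
  · rintro ⟨p, hp, rfl⟩
    exact ⟨node p, node_ne_zero p, rfl, isSingularAt_node hp⟩

lemma ncard_singularLocus_polySextic9 : (singularLocus polySextic9).ncard = 28 := by
  rw [singularLocus_polySextic9, Set.ncard_image_of_injective _ projNode_injective,
    Set.ncard_coe_finset, card_nodeIndices]

end Sextic9

/-- The sextic `F₁·F₂·F₃·F₄·S₅,₆ − S³ = 0` has exactly `28` singular points in
`ℙ³(ℂ)`, and every singular point lies on the quadric `S = 0`. -/
theorem sing_sextic9_card_and_on_quadric :
    {p : Projectivization ℂ (Fin 4 → ℂ) |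
        ∃ (x : Fin 4 → ℂ) (hx : x ≠ 0), Projectivization.mk ℂ x hx = p ∧
          ∀ i : Fin 4, eval x (pderiv i polySextic9) = 0}.ncard = 28 ∧
    ∀ x : Fin 4 → ℂ, x ≠ 0 → (∀ i : Fin 4, eval x (pderiv i polySextic9) = 0) →
      eval x polyS = 0 := by
  exact ⟨Sextic9.ncard_singularLocus_polySextic9,
    fun _ _ h ↦ Sextic9.eval_polyS_eq_zero_of_isSingularAt h⟩
end

section
/- The complex vector space of homogeneous polynomials of degree 4 in ℂ[y₀,y₁,y₂,y₃] that vanish at all 27 points (1, 0, a, b), (1, a, 0, b), (1, a, b, 0) with a³ = b³ = −1/3 has dimension 11 (equivalently, these 27 points impose exactly 24 independent linear conditions on the 35-dimensional space of quartic forms). -/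
open MvPolynomial

/-- The Fermat cubic `R = y₀³ + y₁³ + y₂³ + y₃³`. -/
noncomputable def fermatR : MvPolynomial (Fin 4) ℂ := X 0 ^ 3 + X 1 ^ 3 + X 2 ^ 3 + X 3 ^ 3

/-- The cubic `S₁ = y₁³ + R`. -/
noncomputable def fermatS1 : MvPolynomial (Fin 4) ℂ := X 1 ^ 3 + fermatR

/-- The cubic `S₂ = y₂³ + R`. -/
noncomputable def fermatS2 : MvPolynomial (Fin 4) ℂ := X 2 ^ 3 + fermatR

/-- The cubic `S₃ = y₃³ + R`. -/
noncomputable def fermatS3 : MvPolynomial (Fin 4) ℂ := X 3 ^ 3 + fermatR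

/-- The cubic `S = y₁·y₂·y₃`. -/
noncomputable def fermatQ : MvPolynomial (Fin 4) ℂ := X 1 * X 2 * X 3
/-- The `27` cusps of the residual sextic, as vectors in `ℂ⁴`. -/
def fermatCusps : Set (Fin 4 → ℂ) :=
  {x | ∃ a b : ℂ, a ^ 3 = -(1/3) ∧ b ^ 3 = -(1/3) ∧
    (x = ![1, 0, a, b] ∨ x = ![1, a, 0, b] ∨ x = ![1, a, b, 0])}

/-- The space of homogeneous quartic forms vanishing at all `27` cusps. -/
noncomputable def quarticsThroughFermatCusps : Submodule ℂ (MvPolynomial (Fin 4) ℂ) :=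
  homogeneousSubmodule (Fin 4) ℂ 4 ⊓
    ⨅ (x : Fin 4 → ℂ) (_ : x ∈ fermatCusps),
      LinearMap.ker (aeval x : MvPolynomial (Fin 4) ℂ →ₐ[ℂ] ℂ).toLinearMap

/-!
The group `μ₃³` scaling `y₁, y₂, y₃` permutes the cusps, with one orbit on each face `y_k = 0`. By
linear independence of characters, a form vanishes on such an orbit if and only if each of its parts
with prescribed exponents of `y₁, y₂, y₃` modulo 3 vanishes at one point of the orbit. Remove from a
quartic the eleven monomials `y_j·y₁y₂y₃`, `y_j⁴` and `y₀³y_i`: every such part then has at most one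
monomial on a given face, except that `y₀y₁³`, `y₀y₂³`, `y₀y₃³` lie in one part, two of them on each
face. Vanishing at the cusps makes the coefficients of these three sum to zero in pairs, so they are
zero like all the others: a quartic through the cusps is determined by its eleven removed
coefficients. Conversely `y_j·S`, `y_j·(3R − y₀³)` and `y_i·S_i` are eleven quartics through the
cusps. On the edges where all coordinates but `y₀` and `y_i` vanish, the first four are zero and the
other seven are independent.
-/

section RootsOfUnity

variable {σ K : Type*} [Fintype σ] [CommRing K] {n : σ → ℕ}

variable (K n) in
/-- The character through which the group `∏ᵢ μ_{nᵢ}(K)` of diagonal scalings acts on the monomial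
with exponent vector `d`. -/
def monomialCharacter (d : σ →₀ ℕ) : (∀ i, rootsOfUnity (n i) K) →* K where
  toFun t := ∏ i, ((t i : Kˣ) : K) ^ d i
  map_one' := by simp
  map_mul' s t := by simp [mul_pow, Finset.prod_mul_distrib]

lemma monomialCharacter_apply (d : σ →₀ ℕ) (t : ∀ i, rootsOfUnity (n i) K) :
    monomialCharacter K n d t = ∏ i, ((t i : Kˣ) : K) ^ d i := rfl

lemma monomialCharacter_eq_iff {ζ : σ → K} (hζ : ∀ i, IsPrimitiveRoot (ζ i) (n i))
    (hn : ∀ i, n i ≠ 0) {d e : σ →₀ ℕ} :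
    monomialCharacter K n d = monomialCharacter K n e ↔ ∀ i, d i ≡ e i [MOD n i] := by
  classical
  constructor
  · intro h i
    have := NeZero.mk (hn i)
    let g := (hζ i).toRootsOfUnity
    have hg : orderOf g = n i :=
      ((hζ i).eq_orderOf.trans (by rw [← orderOf_submonoid g, ← orderOf_units]; rfl)).symm
    have hi := DFunLike.congr_fun h (Pi.mulSingle i g)
    rw [monomialCharacter_apply, monomialCharacter_apply,
      Fintype.prod_eq_single i (by intro j hj; simp [hj]),
      Fintype.prod_eq_single i (by intro j hj; simp [hj]), Pi.mulSingle_eq_same] at hi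
    rw [← hg, ← pow_eq_pow_iff_modEq]
    exact Subtype.ext (Units.ext (by simpa using hi))
  · intro h
    refine MonoidHom.ext fun t ↦ Finset.prod_congr rfl fun i _ ↦ ?_
    have ht : t i ^ n i = 1 := Subtype.ext ((mem_rootsOfUnity _ _).1 (t i).2)
    have hde := pow_eq_pow_iff_modEq.2 ((h i).of_dvd (orderOf_dvd_of_pow_eq_one ht))
    exact_mod_cast congrArg (fun u : rootsOfUnity (n i) K ↦ ((u : Kˣ) : K)) hde

variable [IsDomain K]

lemma sum_coeff_mul_prod_pow_eq_zero_of_monomialCharacter_eq {x : σ → K} {P : MvPolynomial σ K}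
    (h : ∀ t : ∀ i, rootsOfUnity (n i) K, eval (fun i ↦ ((t i : Kˣ) : K) * x i) P = 0)
    (χ : (∀ i, rootsOfUnity (n i) K) →* K) [DecidablePred (monomialCharacter K n · = χ)] :
    ∑ d ∈ P.support with monomialCharacter K n d = χ, coeff d P * ∏ i, x i ^ d i = 0 := by
  classical
  let s := insert χ (P.support.image (monomialCharacter K n))
  have hmaps : ∀ d ∈ P.support, monomialCharacter K n d ∈ s := fun d hd ↦
    Finset.mem_insert_of_mem (Finset.mem_image_of_mem _ hd)
  have hsum : ∑ ψ ∈ s, (∑ d ∈ P.support with monomialCharacter K n d = ψ,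
      coeff d P * ∏ i, x i ^ d i) • (ψ : (∀ i, rootsOfUnity (n i) K) → K) = 0 := by
    funext t
    simp_rw [Finset.sum_apply, Pi.smul_apply, smul_eq_mul, Finset.sum_mul]
    calc ∑ ψ ∈ s, ∑ d ∈ P.support with monomialCharacter K n d = ψ,
          coeff d P * (∏ i, x i ^ d i) * ψ t
        = ∑ ψ ∈ s, ∑ d ∈ P.support with monomialCharacter K n d = ψ,
          coeff d P * (∏ i, x i ^ d i) * monomialCharacter K n d t :=
          Finset.sum_congr rfl fun ψ _ ↦ Finset.sum_congr rfl fun d hd ↦ by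
            rw [(Finset.mem_filter.1 hd).2]
      _ = ∑ d ∈ P.support, coeff d P * (∏ i, x i ^ d i) * monomialCharacter K n d t :=
          Finset.sum_fiberwise_of_maps_to hmaps _
      _ = eval (fun i ↦ ((t i : Kˣ) : K) * x i) P := by
          simp_rw [eval_eq', mul_pow, Finset.prod_mul_distrib, monomialCharacter_apply,
            mul_comm (∏ i, ((t i : Kˣ) : K) ^ _), mul_assoc]
      _ = 0 := h t
  convert linearIndependent_iff'.1 (linearIndependent_monoidHom _ K) s _ hsum χ
    (Finset.mem_insert_self χ _)

lemma sum_coeff_mul_prod_pow_eq_zero_of_modEq {ζ : σ → K}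
    (hζ : ∀ i, IsPrimitiveRoot (ζ i) (n i)) (hn : ∀ i, n i ≠ 0) {x : σ → K} {P : MvPolynomial σ K}
    (h : ∀ t : ∀ i, rootsOfUnity (n i) K, eval (fun i ↦ ((t i : Kˣ) : K) * x i) P = 0)
    {e : σ →₀ ℕ} {s : Finset (σ →₀ ℕ)} (hse : ∀ d ∈ s, ∀ i, d i ≡ e i [MOD n i])
    (hs : ∀ d ∈ P.support, (∀ i, d i ≡ e i [MOD n i]) → ∏ i, x i ^ d i ≠ 0 → d ∈ s) :
    ∑ d ∈ s, coeff d P * ∏ i, x i ^ d i = 0 := by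
  classical
  rw [← sum_coeff_mul_prod_pow_eq_zero_of_monomialCharacter_eq h (monomialCharacter K n e)]
  refine Finset.sum_congr_of_eq_on_inter (fun d hd hd' ↦ ?_) (fun d hd hds ↦ ?_) fun _ _ _ ↦ rfl
  · have : d ∉ P.support := fun hdP ↦ hd' <|
      Finset.mem_filter.2 ⟨hdP, (monomialCharacter_eq_iff hζ hn).2 (hse d hd)⟩
    rw [notMem_support_iff.1 this, zero_mul]
  · obtain ⟨hdP, hde⟩ := Finset.mem_filter.1 hd
    by_contra hne
    exact hds (hs d hdP ((monomialCharacter_eq_iff hζ hn).1 hde) (right_ne_zero_of_mul hne))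

end RootsOfUnity

section Cusps

lemma mem_quarticsThroughFermatCusps {P : MvPolynomial (Fin 4) ℂ} :
    P ∈ quarticsThroughFermatCusps ↔ P.IsHomogeneous 4 ∧ ∀ x ∈ fermatCusps, eval x P = 0 := by
  simp [quarticsThroughFermatCusps, aeval_eq_eval]

lemma mem_fermatCusps_iff {x : Fin 4 → ℂ} :
    x ∈ fermatCusps ↔
      x 0 = 1 ∧ ∃ k : Fin 3, x k.succ = 0 ∧ ∀ j ≠ k, x j.succ ^ 3 = -(1 / 3) := by
  constructor
  · rintro ⟨a, b, ha, hb, rfl | rfl | rfl⟩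
    · exact ⟨rfl, 0, rfl, by simp [Fin.forall_fin_succ, ha, hb]⟩
    · exact ⟨rfl, 1, rfl, by simp [Fin.forall_fin_succ, ha, hb]⟩
    · exact ⟨rfl, 2, rfl, by simp [Fin.forall_fin_succ, ha, hb]⟩
  · rintro ⟨h0, k, hk, h⟩
    fin_cases k
    · refine ⟨x 2, x 3, h 1 (by decide), h 2 (by decide), .inl ?_⟩
      ext i; fin_cases i <;> simp_all
    · refine ⟨x 1, x 3, h 0 (by decide), h 2 (by decide), .inr (.inl ?_)⟩
      ext i; fin_cases i <;> simp_all
    · refine ⟨x 1, x 2, h 0 (by decide), h 1 (by decide), .inr (.inr ?_)⟩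
      ext i; fin_cases i <;> simp_all

lemma sum_coeff_mul_pow_eq_zero_of_modEq_three {P : MvPolynomial (Fin 4) ℂ}
    (hP : ∀ x ∈ fermatCusps, eval x P = 0) {r : ℂ} (hr : r ^ 3 = -(1 / 3)) {k : Fin 3}
    {e : Fin 4 →₀ ℕ} {s : Finset (Fin 4 →₀ ℕ)}
    (hse : ∀ d ∈ s, d k.succ = 0 ∧ ∀ i : Fin 3, d i.succ ≡ e i.succ [MOD 3])
    (hs : ∀ d ∈ P.support, (∀ i : Fin 3, d i.succ ≡ e i.succ [MOD 3]) → d k.succ = 0 → d ∈ s) :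
    ∑ d ∈ s, coeff d P * r ^ (∑ i : Fin 3, d i.succ) = 0 := by
  let n : Fin 4 → ℕ := Fin.cons 1 fun _ ↦ 3
  let ζ : Fin 4 → ℂ := Fin.cons 1 fun _ ↦ Complex.exp (2 * Real.pi * Complex.I / (3 : ℕ))
  let x : Fin 4 → ℂ := Fin.cons 1 (Function.update (fun _ ↦ r) k 0)
  have hζ : ∀ i, IsPrimitiveRoot (ζ i) (n i) :=
    Fin.cases IsPrimitiveRoot.one fun _ ↦ Complex.isPrimitiveRoot_exp 3 three_ne_zero
  have hn : ∀ i, n i ≠ 0 := Fin.cases one_ne_zero fun _ ↦ three_ne_zero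
  have hmod {d : Fin 4 →₀ ℕ} :
      (∀ i, d i ≡ e i [MOD n i]) ↔ ∀ i : Fin 3, d i.succ ≡ e i.succ [MOD 3] := by
    simp [n, Fin.forall_fin_succ (n := 3), Nat.modEq_one]
  have horbit (t : ∀ i, rootsOfUnity (n i) ℂ) : eval (fun i ↦ ((t i : ℂˣ) : ℂ) * x i) P = 0 := by
    have ht (i) : ((t i : ℂˣ) : ℂ) ^ n i = 1 := by
      rw [← Units.val_pow_eq_pow_val, (mem_rootsOfUnity _ _).1 (t i).2, Units.val_one]
    refine hP _ (mem_fermatCusps_iff.2 ⟨?_, k, by simp [x], fun j hj ↦ ?_⟩)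
    · simpa only [n, x, Fin.cons_zero, mul_one, pow_one] using ht 0
    · have := ht j.succ
      simp only [n, Fin.cons_succ] at this
      simp [x, hj, mul_pow, this, hr]
  have hx {d : Fin 4 →₀ ℕ} (hd : d k.succ = 0) :
      ∏ i, x i ^ d i = r ^ (∑ i : Fin 3, d i.succ) := by
    rw [Fin.prod_univ_succ, ← Finset.prod_pow_eq_pow_sum]
    simp only [x, Fin.cons_zero, one_pow, one_mul, Fin.cons_succ]
    refine Finset.prod_congr rfl fun i _ ↦ ?_
    rcases eq_or_ne i k with rfl | hik
    · simp [hd]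
    · simp [hik]
  rw [← sum_coeff_mul_prod_pow_eq_zero_of_modEq hζ hn horbit (fun d hd ↦ hmod.2 (hse d hd).2)
    fun d hd hde hne ↦ hs d hd (hmod.1 hde) ?_]
  · exact Finset.sum_congr rfl fun d hd ↦ by rw [hx (hse d hd).1]
  · contrapose! hne
    exact Finset.prod_eq_zero (Finset.mem_univ k.succ) (by simp [x, hne])

end Cusps

section Exponents

lemma exists_eq_add_single_of_le {σ : Type*} {d m : σ →₀ ℕ} (hle : m ≤ d)
    (hdeg : d.degree = m.degree + 1) : ∃ j, d = m + Finsupp.single j 1 := by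
  have hd : m + (d - m) = d := add_tsub_cancel_of_le hle
  have hone : (d - m).degree = 1 := by
    rw [← hd, map_add] at hdeg
    exact Nat.add_left_cancel hdeg
  obtain ⟨j, hj⟩ := Finsupp.range_single_one.ge hone
  exact ⟨j, by rw [← hd, ← hj]⟩

/-- The exponent vectors of `y_j·y₁y₂y₃`, of `y_j⁴` and of `y₀³y_{i+1}`: the coefficients of these
eleven monomials determine a quartic through the cusps. -/
noncomputable def pivotExponent : Fin 4 ⊕ Fin 4 ⊕ Fin 3 → Fin 4 →₀ ℕ :=
  Sum.elim (fun j ↦ ∑ i : Fin 3, Finsupp.single i.succ 1 + Finsupp.single j 1) <|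
    Sum.elim (fun j ↦ Finsupp.single j 4) fun i ↦ Finsupp.single 0 3 + Finsupp.single i.succ 1

/-- A quartic exponent vector is reduced if its monomial is divisible by none of `y₁y₂y₃`, `y_j⁴`
and `y₀³`, that is, if it is not a pivot. -/
def IsReducedExponent (d : Fin 4 →₀ ℕ) : Prop :=
  d.degree = 4 ∧ d 0 ≤ 2 ∧ (∀ i : Fin 3, d i.succ ≤ 3) ∧ ∃ k : Fin 3, d k.succ = 0

lemma isReducedExponent_of_notMem_range {d : Fin 4 →₀ ℕ} (hd : d.degree = 4)
    (h : d ∉ Set.range pivotExponent) : IsReducedExponent d := by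
  have hpow (j) (hj : 4 ≤ d j) : d = pivotExponent (.inr (.inl j)) := by
    have hsub : (d - Finsupp.single j 4).degree = 0 := by
      have := congrArg Finsupp.degree (add_tsub_cancel_of_le (Finsupp.single_le_iff.2 hj))
      rw [map_add, Finsupp.degree_single, hd] at this
      exact Nat.add_left_cancel this
    rw [Finsupp.degree_eq_zero_iff, tsub_eq_zero_iff_le] at hsub
    exact hsub.antisymm (Finsupp.single_le_iff.2 hj)
  refine ⟨hd, ?_, fun i ↦ ?_, ?_⟩ <;> by_contra! hlt
  · obtain ⟨j, hj⟩ := exists_eq_add_single_of_le (Finsupp.single_le_iff.2 hlt) (by simp [hd])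
    cases j using Fin.cases with
    | zero => exact h ⟨_, (hpow 0 (by simp [hj])).symm⟩
    | succ i => exact h ⟨.inr (.inr i), hj.symm⟩
  · exact h ⟨_, (hpow _ hlt).symm⟩
  · have hle : ∑ i : Fin 3, Finsupp.single i.succ 1 ≤ d := by
      refine Fin.cases (by simp) fun i ↦ ?_
      simpa [Finsupp.single_apply, Nat.one_le_iff_ne_zero] using hlt i
    obtain ⟨j, hj⟩ := exists_eq_add_single_of_le hle (by simp [hd])
    exact h ⟨.inl j, hj.symm⟩

/-- The exponent vector of `y₀y_{i+1}³`. -/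
noncomputable def mixedCubeExponent (i : Fin 3) : Fin 4 →₀ ℕ :=
  Finsupp.single 0 1 + Finsupp.single i.succ 3

lemma mixedCubeExponent_succ (i j : Fin 3) :
    mixedCubeExponent i j.succ = if i = j then 3 else 0 := by
  simp [mixedCubeExponent, Finsupp.single_apply]

lemma IsReducedExponent.exists_eq_mixedCubeExponent {d : Fin 4 →₀ ℕ} (hd : IsReducedExponent d)
    (h : ∀ i : Fin 3, d i.succ ≡ 0 [MOD 3]) : ∃ i, d = mixedCubeExponent i := by
  obtain ⟨hdeg, h0, hle, -⟩ := hd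
  have hzero_or (i : Fin 3) : d i.succ = 0 ∨ d i.succ = 3 := by
    have := hle i; have := h i; unfold Nat.ModEq at this; omega
  obtain ⟨i, hi⟩ : ∃ i : Fin 3, d i.succ = 3 := by
    by_contra! hne
    have hz (i : Fin 3) := (hzero_or i).resolve_right (hne i)
    rw [Finsupp.degree_eq_sum, Fin.sum_univ_succ, Finset.sum_eq_zero fun i _ ↦ hz i] at hdeg
    omega
  obtain ⟨j, hj⟩ := exists_eq_add_single_of_le (Finsupp.single_le_iff.2 hi.ge) (by simp [hdeg])
  cases j using Fin.cases with
  | zero => exact ⟨i, hj.trans (add_comm _ _)⟩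
  | succ j =>
    have hdj := hzero_or j
    rw [hj, Finsupp.add_apply, Finsupp.single_apply, Finsupp.single_eq_same] at hdj
    grind

lemma IsReducedExponent.eq_of_modEq {d e : Fin 4 →₀ ℕ} (hd : IsReducedExponent d)
    (he : IsReducedExponent e) (h : ∀ i : Fin 3, d i.succ ≡ e i.succ [MOD 3])
    (hne : ¬ ∀ i : Fin 3, e i.succ ≡ 0 [MOD 3]) {k : Fin 3} (hdk : d k.succ = 0)
    (hek : e k.succ = 0) : d = e := by
  obtain ⟨hdeg, hd0, hdle, -⟩ := hd
  obtain ⟨hdeg', he0, hele, -⟩ := he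
  rw [Finsupp.degree_eq_sum, Fin.sum_univ_succ] at hdeg hdeg'
  obtain ⟨i, hi⟩ := not_forall.1 hne
  have hik : i ≠ k := by
    rintro rfl
    exact hi (by rw [hek])
  have hdi : d i.succ = e i.succ := by
    have := h i; have := hdle i; have := hele i; unfold Nat.ModEq at *; omega
  have hsucc (j : Fin 3) : d j.succ = e j.succ := by
    rcases eq_or_ne j k with rfl | hjk
    · exact hdk.trans hek.symm
    rcases eq_or_ne i j with rfl | hij
    · exact hdi
    have huniv : ∀ {i j k : Fin 3}, i ≠ j → i ≠ k → j ≠ k → Finset.univ = {i, j, k} := by decide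
    have hsum (f : Fin 3 → ℕ) : ∑ l, f l = f i + (f j + f k) := by
      rw [huniv hij hik hjk, Finset.sum_insert (by simp [hij, hik]), Finset.sum_pair hjk]
    rw [hsum] at hdeg hdeg'
    -- Unequal values would be 0 and 3, and then the degree makes `d 0` or `e 0` equal to 3.
    have := h j; have := hdle j; have := hele j; unfold Nat.ModEq at *; omega
  simp only [hsucc] at hdeg
  exact Finsupp.ext (Fin.cases (by omega) hsucc)

end Exponents

section UpperBound

lemma coeff_eq_zero_of_isReducedExponent {P : MvPolynomial (Fin 4) ℂ}
    (hP : ∀ x ∈ fermatCusps, eval x P = 0) (hred : ∀ d ∈ P.support, IsReducedExponent d)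
    {e : Fin 4 →₀ ℕ} (he : IsReducedExponent e) (hne : ¬ ∀ i : Fin 3, e i.succ ≡ 0 [MOD 3]) :
    coeff e P = 0 := by
  obtain ⟨r, hr⟩ := IsAlgClosed.exists_pow_nat_eq (-(1 / 3) : ℂ) three_pos
  obtain ⟨k, hk⟩ := he.2.2.2
  have hsum := sum_coeff_mul_pow_eq_zero_of_modEq_three hP hr (e := e) (s := {e})
    (fun d hd ↦ by rw [Finset.mem_singleton.1 hd]; exact ⟨hk, fun i ↦ rfl⟩)
    fun d hdP hde hdk ↦ Finset.mem_singleton.2 ((hred d hdP).eq_of_modEq he hde hne hdk hk)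
  rw [Finset.sum_singleton] at hsum
  have hr0 : r ≠ 0 := by rintro rfl; norm_num at hr
  exact (mul_eq_zero.1 hsum).resolve_right (pow_ne_zero _ hr0)

lemma coeff_mixedCubeExponent_add_eq_zero {P : MvPolynomial (Fin 4) ℂ}
    (hP : ∀ x ∈ fermatCusps, eval x P = 0) (hred : ∀ d ∈ P.support, IsReducedExponent d)
    {i j k : Fin 3} (hij : i ≠ j) (hik : i ≠ k) (hjk : j ≠ k) :
    coeff (mixedCubeExponent i) P + coeff (mixedCubeExponent j) P = 0 := by
  obtain ⟨r, hr⟩ := IsAlgClosed.exists_pow_nat_eq (-(1 / 3) : ℂ) three_pos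
  have hinj : mixedCubeExponent i ≠ mixedCubeExponent j := fun h ↦ by
    simpa [mixedCubeExponent_succ, hij.symm] using DFunLike.congr_fun h i.succ
  have hmod (l m : Fin 3) : mixedCubeExponent l m.succ ≡ 0 [MOD 3] := by
    rw [mixedCubeExponent_succ]
    split_ifs <;> rfl
  have hsum := sum_coeff_mul_pow_eq_zero_of_modEq_three hP hr (k := k) (e := 0)
    (s := {mixedCubeExponent i, mixedCubeExponent j})
    (by simp only [Finset.mem_insert, Finset.mem_singleton]
        rintro d (rfl | rfl)
        · exact ⟨by simp [mixedCubeExponent_succ, hik], hmod i⟩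
        · exact ⟨by simp [mixedCubeExponent_succ, hjk], hmod j⟩)
    fun d hdP hd hdk ↦ by
      obtain ⟨l, rfl⟩ := (hred d hdP).exists_eq_mixedCubeExponent hd
      have hlk : l ≠ k := by rintro rfl; simp [mixedCubeExponent_succ] at hdk
      obtain rfl | rfl : l = i ∨ l = j := by omega
      all_goals simp
  simp only [Finset.sum_pair hinj, mixedCubeExponent_succ, Finset.sum_ite_eq, Finset.mem_univ,
    if_true, hr] at hsum
  linear_combination -3 * hsum

lemma eq_zero_of_support_isReducedExponent {P : MvPolynomial (Fin 4) ℂ}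
    (hP : ∀ x ∈ fermatCusps, eval x P = 0) (hred : ∀ d ∈ P.support, IsReducedExponent d) :
    P = 0 := by
  ext d
  by_contra hd
  have hdred := hred d (mem_support_iff.2 hd)
  by_cases hcube : ∀ i : Fin 3, d i.succ ≡ 0 [MOD 3]
  · obtain ⟨i, rfl⟩ := hdred.exists_eq_mixedCubeExponent hcube
    have hthird : ∀ i : Fin 3, ∃ j k, i ≠ j ∧ i ≠ k ∧ j ≠ k := by decide
    obtain ⟨j, k, hij, hik, hjk⟩ := hthird i
    have hij0 := coeff_mixedCubeExponent_add_eq_zero hP hred hij hik hjk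
    have hik0 := coeff_mixedCubeExponent_add_eq_zero hP hred hik hij hjk.symm
    have hjk0 := coeff_mixedCubeExponent_add_eq_zero hP hred hjk hij.symm hik.symm
    exact hd (by rw [coeff_zero]; linear_combination (hij0 + hik0 - hjk0) / 2)
  · exact hd (coeff_eq_zero_of_isReducedExponent hP hred hdred hcube)

/-- The coefficients of a form at the exponents `pivotExponent`. -/
noncomputable def pivotCoeff :
    quarticsThroughFermatCusps →ₗ[ℂ] Fin 4 ⊕ Fin 4 ⊕ Fin 3 → ℂ :=
  LinearMap.pi fun a ↦ lcoeff ℂ (pivotExponent a) ∘ₗ quarticsThroughFermatCusps.subtype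

lemma pivotCoeff_injective : Function.Injective pivotCoeff := by
  rw [injective_iff_map_eq_zero]
  rintro ⟨P, hP⟩ hpivot
  obtain ⟨hhom, hvan⟩ := mem_quarticsThroughFermatCusps.1 hP
  refine Subtype.ext (eq_zero_of_support_isReducedExponent hvan fun d hd ↦ ?_)
  have hdP := mem_support_iff.1 hd
  refine isReducedExponent_of_notMem_range (by_contra fun h ↦ hdP (hhom.coeff_eq_zero h)) ?_
  rintro ⟨a, rfl⟩
  exact hdP (congrFun hpivot a)

end UpperBound

section LowerBound

/-- The cubic `T = 3R − y₀³` through the cusps, where `R = 1/3` and `y₀ = 1`. -/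
noncomputable def cuspCubic : MvPolynomial (Fin 4) ℂ := 3 * fermatR - X 0 ^ 3

/-- The quartics `y_j·S`, `y_j·T` and `y_{i+1}·S_{i+1}` through the cusps, where `T` is `cuspCubic`
and the cubics `S₁`, `S₂`, `S₃` are written out to keep the index uniform. -/
noncomputable def cuspQuartic : Fin 4 ⊕ Fin 4 ⊕ Fin 3 → MvPolynomial (Fin 4) ℂ :=
  Sum.elim (fun j ↦ X j * fermatQ) <| Sum.elim (fun j ↦ X j * cuspCubic)
    fun i ↦ X i.succ * (X i.succ ^ 3 + fermatR)

lemma isHomogeneous_fermatR : fermatR.IsHomogeneous 3 :=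
  (((isHomogeneous_X_pow 0 3).add (isHomogeneous_X_pow 1 3)).add (isHomogeneous_X_pow 2 3)).add
    (isHomogeneous_X_pow 3 3)

lemma isHomogeneous_fermatQ : fermatQ.IsHomogeneous 3 :=
  ((isHomogeneous_X ℂ 1).mul (isHomogeneous_X ℂ 2)).mul (isHomogeneous_X ℂ 3)

lemma isHomogeneous_cuspCubic : cuspCubic.IsHomogeneous 3 :=
  (isHomogeneous_fermatR.C_mul 3).sub (isHomogeneous_X_pow 0 3)

lemma isHomogeneous_cuspQuartic (a : Fin 4 ⊕ Fin 4 ⊕ Fin 3) :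
    (cuspQuartic a).IsHomogeneous 4 := by
  have hmul (j : Fin 4) {F : MvPolynomial (Fin 4) ℂ} (hF : F.IsHomogeneous 3) :
      (X j * F).IsHomogeneous 4 := (isHomogeneous_X ℂ j).mul hF
  rcases a with j | j | i
  · exact hmul j isHomogeneous_fermatQ
  · exact hmul j isHomogeneous_cuspCubic
  · exact hmul _ ((isHomogeneous_X_pow _ 3).add isHomogeneous_fermatR)

lemma eval_fermatQ_of_mem_fermatCusps {x : Fin 4 → ℂ} (hx : x ∈ fermatCusps) :
    eval x fermatQ = 0 := by
  obtain ⟨a, b, -, -, rfl | rfl | rfl⟩ := hx <;> simp [fermatQ]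

lemma eval_fermatR_of_mem_fermatCusps {x : Fin 4 → ℂ} (hx : x ∈ fermatCusps) :
    eval x fermatR = 1 / 3 := by
  obtain ⟨a, b, ha, hb, rfl | rfl | rfl⟩ := hx <;> simp [fermatR, ha, hb] <;> norm_num

lemma eval_cuspCubic_of_mem_fermatCusps {x : Fin 4 → ℂ} (hx : x ∈ fermatCusps) :
    eval x cuspCubic = 0 := by
  simp [cuspCubic, eval_fermatR_of_mem_fermatCusps hx, (mem_fermatCusps_iff.1 hx).1]

lemma eval_cuspQuartic_of_mem_fermatCusps {x : Fin 4 → ℂ} (hx : x ∈ fermatCusps)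
    (a : Fin 4 ⊕ Fin 4 ⊕ Fin 3) : eval x (cuspQuartic a) = 0 := by
  rcases a with j | j | i
  · simp [cuspQuartic, eval_fermatQ_of_mem_fermatCusps hx]
  · simp [cuspQuartic, eval_cuspCubic_of_mem_fermatCusps hx]
  · obtain ⟨-, k, hk, hcube⟩ := mem_fermatCusps_iff.1 hx
    rcases eq_or_ne i k with rfl | hik
    · simp [cuspQuartic, hk]
    · simp [cuspQuartic, hcube i hik, eval_fermatR_of_mem_fermatCusps hx]

lemma cuspQuartic_mem (a : Fin 4 ⊕ Fin 4 ⊕ Fin 3) :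
    cuspQuartic a ∈ quarticsThroughFermatCusps :=
  mem_quarticsThroughFermatCusps.2
    ⟨isHomogeneous_cuspQuartic a, fun _ hx ↦ eval_cuspQuartic_of_mem_fermatCusps hx a⟩

lemma sum_mul_eval_cuspQuartic_single_add_single (g : Fin 4 ⊕ Fin 4 ⊕ Fin 3 → ℂ) (i : Fin 3)
    (s t : ℂ) : ∑ a, g a * eval (Pi.single 0 s + Pi.single i.succ t) (cuspQuartic a) =
      (g (.inr (.inl 0)) * s + g (.inr (.inl i.succ)) * t) * (2 * s ^ 3 + 3 * t ^ 3) +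
        g (.inr (.inr i)) * (t * (s ^ 3 + 2 * t ^ 3)) := by
  set x : Fin 4 → ℂ := Pi.single 0 s + Pi.single i.succ t with hx
  have hx₀ : x 0 = s := by simp [hx]
  have hxi : x i.succ = t := by simp [hx]
  have hxj (j : Fin 3) (hj : j ≠ i) : x j.succ = 0 := by simp [hx, hj]
  have hR : eval x fermatR = s ^ 3 + t ^ 3 := by
    fin_cases i <;> simp [fermatR, hx]
  have hS : eval x fermatQ = 0 := by
    fin_cases i <;> simp [fermatQ, hx]
  have hT : eval x cuspCubic = 2 * s ^ 3 + 3 * t ^ 3 := by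
    simp only [cuspCubic, map_sub, map_mul, map_pow, map_ofNat, eval_X, hR, hx₀]
    ring
  simp only [cuspQuartic, Fintype.sum_sum_type, Sum.elim_inl, Sum.elim_inr, map_mul, map_add,
    map_pow, eval_X, hR, hS, hT]
  rw [Fin.sum_univ_succ (n := 3) fun j ↦ g (.inr (.inl j)) * _,
    Fintype.sum_eq_single i fun j hj ↦ by simp [hxj j hj],
    Fintype.sum_eq_single i fun j hj ↦ by simp [hxj j hj]]
  simp only [hx₀, hxi, mul_zero, Finset.sum_const_zero, zero_add]
  ring

lemma eq_zero_of_sum_smul_cuspQuartic_eq_zero {g : Fin 4 ⊕ Fin 4 ⊕ Fin 3 → ℂ}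
    (hg : ∑ a, g a • cuspQuartic a = 0) :
    (∀ j, g (.inr (.inl j)) = 0) ∧ ∀ i, g (.inr (.inr i)) = 0 := by
  have hedge (i : Fin 3) (s t : ℂ) :
      (g (.inr (.inl 0)) * s + g (.inr (.inl i.succ)) * t) * (2 * s ^ 3 + 3 * t ^ 3) +
        g (.inr (.inr i)) * (t * (s ^ 3 + 2 * t ^ 3)) = 0 := by
    have h := congrArg (eval (Pi.single 0 s + Pi.single i.succ t)) hg
    simp only [map_sum, smul_eval, map_zero] at h
    rwa [sum_mul_eval_cuspQuartic_single_add_single] at h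
  have hzero : g (.inr (.inl 0)) = 0 := by linear_combination hedge 0 1 0 / 2
  have hsucc (i : Fin 3) : g (.inr (.inl i.succ)) = 0 := by
    linear_combination -3 * hedge i 0 1 + 2 * hedge i 1 1 - 10 * hzero
  refine ⟨Fin.cases hzero hsucc, fun i ↦ ?_⟩
  linear_combination hedge i 0 1 / 2 - 3 / 2 * hsucc i

lemma linearIndependent_cuspQuartic : LinearIndependent ℂ cuspQuartic := by
  rw [Fintype.linearIndependent_iff]
  intro g hg
  obtain ⟨hcubic, hS⟩ := eq_zero_of_sum_smul_cuspQuartic_eq_zero hg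
  have hmul : (∑ j, g (.inl j) • X j) * fermatQ = 0 := by
    simpa [hcubic, hS, Finset.sum_mul, cuspQuartic] using hg
  have hQ : fermatQ ≠ 0 := mul_ne_zero (mul_ne_zero (X_ne_zero 1) (X_ne_zero 2)) (X_ne_zero 3)
  have hlin := Fintype.linearIndependent_iff.1 (linearIndependent_X (Fin 4) ℂ) _
    ((mul_eq_zero.1 hmul).resolve_right hQ)
  rintro (j | j | i)
  exacts [hlin j, hcubic j, hS i]

end LowerBound

/-- The `27` cusps impose exactly `24` independent conditions on quartic forms:
the space of quartics through them has dimension `11`. -/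
theorem finrank_quartics_through_fermat_cusps :
    Module.finrank ℂ ↥quarticsThroughFermatCusps = 11 := by
  have : Module.Finite ℂ quarticsThroughFermatCusps := .of_injective _ pivotCoeff_injective
  have hcard : Fintype.card (Fin 4 ⊕ Fin 4 ⊕ Fin 3) = 11 := rfl
  apply le_antisymm
  · simpa only [Module.finrank_pi, hcard] using
      LinearMap.finrank_le_finrank_of_injective pivotCoeff_injective
  · have hindep : LinearIndependent ℂ fun a ↦
        (⟨cuspQuartic a, cuspQuartic_mem a⟩ : quarticsThroughFermatCusps) :=
      .of_comp quarticsThroughFermatCusps.subtype linearIndependent_cuspQuartic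
    simpa only [hcard] using hindep.fintype_card_le_finrank
end

section
/- The set of singular points of the sextic surface G = 0 in ℙ³(ℂ) equals the set of points represented by z ∈ ℂ⁴∖{0} for which the vector (z₀³, z₁³, z₂³, z₃³) is a nonzero scalar multiple of one of the four vectors (0, 1, 1, 8), (1, 0, 1, 8), (1, 1, 0, −49), (8, 8, −49, 0); this set has exactly 36 elements. -/
/-!
The sextic is a quadric in disguise: `G(z) = Q(z₀³, z₁³, z₂³, z₃³)`, where `Q = x₀x₁ - a·b` with `a`
and `b` linear. By the chain rule, `z` is a singular point of `G` exactly when `x = z³` satisfies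
`xᵢ ∂ᵢQ(x) = 0` for all `i`; solving these equations according to which of `x₂`, `x₃` vanish leaves
four points of `ℙ³`. The singular locus is thus the preimage of four points under the coordinatewise
cubing map of `ℙ³`. Each of them has exactly three nonzero coordinates; normalising one of them to
`1`, one is left with a choice of two cube roots, so each fibre has `3² = 9` points.
-/

open MvPolynomial

/-- The cubic form `A = (8/9)z₀³ + (8/9)z₁³ − (64/63)z₂³ + (1/63)z₃³`. -/
noncomputable def labsA : MvPolynomial (Fin 4) ℂ :=
  C (8/9 : ℂ) * X 0 ^ 3 + C (8/9 : ℂ) * X 1 ^ 3 - C (64/63 : ℂ) * X 2 ^ 3 + C (1/63 : ℂ) * X 3 ^ 3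

/-- The cubic form `B = (1/9)z₀³ + (1/9)z₁³ + (1/63)z₂³ − (1/63)z₃³`. -/
noncomputable def labsB : MvPolynomial (Fin 4) ℂ :=
  C (1/9 : ℂ) * X 0 ^ 3 + C (1/9 : ℂ) * X 1 ^ 3 + C (1/63 : ℂ) * X 2 ^ 3 - C (1/63 : ℂ) * X 3 ^ 3

/-- The `36`-cuspidal sextic of Labs, `G = (z₀z₁)³ − A·B`. -/
noncomputable def labsG : MvPolynomial (Fin 4) ℂ := (X 0 * X 1) ^ 3 - labsA * labsB

open Projectivization
open scoped LinearAlgebra.Projectivization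

section Expand

variable {σ R : Type*}

theorem pderiv_expand [CommSemiring R] (n : ℕ) (i : σ) (f : MvPolynomial σ R) :
    pderiv i (expand n f) = C (n : R) * X i ^ (n - 1) * expand n (pderiv i f) := by
  induction f using MvPolynomial.induction_on with
  | C r => simp
  | add f g hf hg => simp only [map_add, hf, hg, mul_add]
  | mul_X f j hf =>
    rcases eq_or_ne i j with rfl | hij
    · simp only [map_mul, map_add, map_natCast, pderiv_mul, pderiv_pow, hf, expand_X,
        pderiv_X_self, map_one]
      ring
    · simp only [map_mul, map_add, pderiv_mul, pderiv_pow, hf, expand_X,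
        pderiv_X_of_ne hij.symm, map_zero]
      ring

theorem eval_pderiv_expand_eq_zero_iff [CommRing R] [IsDomain R] {n : ℕ} [NeZero (n : R)]
    (hn : 1 < n) (i : σ) (f : MvPolynomial σ R) (z : σ → R) :
    eval z (pderiv i (expand n f)) = 0 ↔ (z ^ n) i * eval (z ^ n) (pderiv i f) = 0 := by
  simp [pderiv_expand, NeZero.ne, show n - 1 ≠ 0 by lia, show n ≠ 0 by lia]

end Expand

theorem encard_preimage_range {α β ι : Type*} [Fintype ι] (f : α → β) {g : ι → β}
    (hg : g.Injective) : (f ⁻¹' Set.range g).encard = ∑ i, (f ⁻¹' {g i}).encard := by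
  rw [← Set.iUnion_singleton_eq_range, Set.preimage_iUnion, Set.encard_iUnion_of_finite,
    finsum_eq_sum_of_fintype]
  exact fun i j hij ↦ Disjoint.preimage f (Set.disjoint_singleton.2 (hg.ne hij))

theorem encard_setOf_pow_eq {K : Type*} [Field K] [IsSepClosed K] (n : ℕ) [NeZero (n : K)] {a : K}
    (ha : a ≠ 0) : {x : K | x ^ n = a}.encard = n := by
  classical
  obtain ⟨ζ, hζ⟩ := HasEnoughRootsOfUnity.exists_primitiveRoot K n
  have hn : NeZero n := .of_neZero_natCast K
  have hroots : {x : K | x ^ n = a} = (Polynomial.nthRoots n a).toFinset := by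
    ext x
    simp [Polynomial.mem_nthRoots hn.pos]
  rw [hroots, Set.encard_coe_eq_coe_finsetCard,
    Multiset.toFinset_card_of_nodup (hζ.nthRoots_nodup ha), hζ.card_nthRoots,
    if_pos (IsSepClosed.exists_pow_nat_eq a n)]

theorem setOf_exists_mk_eq_and {K V : Type*} [DivisionRing K] [AddCommGroup V] [Module K V]
    {P : V → Prop} {S : Set (ℙ K V)} (h : ∀ z (hz : z ≠ 0), P z ↔ mk K z hz ∈ S) :
    {p | ∃ (z : V) (hz : z ≠ 0), mk K z hz = p ∧ P z} = S := by
  ext p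
  constructor
  · rintro ⟨z, hz, rfl, hP⟩
    exact (h z hz).1 hP
  · induction p using Projectivization.ind with | h z hz =>
    exact fun hp ↦ ⟨z, hz, rfl, (h z hz).2 hp⟩

section PowerMap

variable {K ι : Type*} [Field K]

/-- The morphism `[z₀ : … : zₖ] ↦ [z₀ⁿ : … : zₖⁿ]` of projective space. -/
def projPow (n : ℕ) : ℙ K (ι → K) → ℙ K (ι → K) :=
  Projectivization.lift (fun v ↦ mk K (v.1 ^ n) (pow_ne_zero n v.2)) fun v w t h ↦
    (mk_eq_mk_iff' K _ _ _ _).2 ⟨t ^ n, by rw [h, smul_pow]⟩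

theorem projPow_mk_eq_mk_iff (n : ℕ) {z w : ι → K} (hz : z ≠ 0) (hw : w ≠ 0) :
    projPow n (mk K z hz) = mk K w hw ↔ ∃ c : K, z ^ n = c • w := by
  simp only [projPow, Projectivization.lift_mk, mk_eq_mk_iff', eq_comm (b := z ^ n)]

theorem encard_projPow_preimage_mk_of_apply_eq_one (n : ℕ) [NeZero n] {w : ι → K}
    (hw : w ≠ 0) {i₀ : ι} (hi₀ : w i₀ = 1) :
    (projPow n ⁻¹' {mk K w hw}).encard = {z : ι → K | z i₀ = 1 ∧ z ^ n = w}.encard := by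
  have ne_zero {z : ι → K} (hz : z i₀ = 1) : z ≠ 0 := fun h ↦ by simp [h] at hz
  let chart (z : {z : ι → K | z i₀ = 1 ∧ z ^ n = w}) : ℙ K (ι → K) := mk K z.1 (ne_zero z.2.1)
  have chart_injective : chart.Injective := by
    intro y z h
    obtain ⟨a, ha⟩ := (mk_eq_mk_iff' K _ _ _ _).1 h
    have ha₁ : a = 1 := by simpa [y.2.1, z.2.1] using congrFun ha i₀
    exact Subtype.ext (by rw [← ha, ha₁, one_smul])
  have range_chart : Set.range chart = projPow n ⁻¹' {mk K w hw} := by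
    ext p
    constructor
    · rintro ⟨⟨z, hz, hzw⟩, rfl⟩
      exact (projPow_mk_eq_mk_iff n _ hw).2 ⟨1, by rw [hzw, one_smul]⟩
    · induction p using Projectivization.ind with | h z hz =>
      intro hp
      obtain ⟨c, hc⟩ := (projPow_mk_eq_mk_iff n hz hw).1 hp
      have hcz : c = z i₀ ^ n := by simpa [hi₀] using (congrFun hc i₀).symm
      have hz₀ : z i₀ ≠ 0 := fun h ↦ hz <| by
        simpa [hcz, h, NeZero.ne n] using hc
      refine ⟨⟨(z i₀)⁻¹ • z, inv_mul_cancel₀ hz₀, ?_⟩, ?_⟩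
      · rw [smul_pow, hc, smul_smul, hcz, ← mul_pow, inv_mul_cancel₀ hz₀, one_pow, one_smul]
      · exact (mk_eq_mk_iff' K _ _ _ _).2 ⟨_, rfl⟩
  rw [← range_chart, ← Set.image_univ, chart_injective.encard_image, Set.encard_univ,
    ENat.card_coe_set_eq]

theorem encard_setOf_apply_eq_one_and_pow_eq [IsSepClosed K] [Finite ι] (n : ℕ) [NeZero (n : K)]
    {w : ι → K} {i₀ : ι} (hi₀ : w i₀ = 1) :
    {z : ι → K | z i₀ = 1 ∧ z ^ n = w}.encard = n ^ (w.support.ncard - 1) := by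
  classical
  cases nonempty_fintype ι
  have hn : n ≠ 0 := (NeZero.of_neZero_natCast K).ne
  let roots (i : ι) : Set K := {x | (i = i₀ → x = 1) ∧ x ^ n = w i}
  have hpi : {z : ι → K | z i₀ = 1 ∧ z ^ n = w} = Set.univ.pi roots := by
    ext z
    simp [roots, _root_.funext_iff, forall_and]
  have encard_roots (i : ι) :
      (roots i).encard = if i ∈ (w.support \ {i₀}).toFinset then (n : ℕ∞) else 1 := by
    rcases eq_or_ne i i₀ with rfl | hi
    · have : roots i = {1} := by
        ext x
        simp +contextual [roots, hi₀]
      simp [this]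
    · rcases eq_or_ne (w i) 0 with hwi | hwi
      · simp [roots, hi, hwi, hn]
      · simp [roots, hi, hwi, encard_setOf_pow_eq n hwi]
  rw [hpi, Set.encard_pi_eq_prod_encard, Finset.prod_congr rfl fun i _ ↦ encard_roots i,
    Finset.prod_ite_mem, Finset.univ_inter, Finset.prod_const, ← Set.ncard_eq_toFinset_card',
    Set.ncard_sdiff_singleton_of_mem (by simp [hi₀])]

theorem encard_projPow_preimage_mk [IsSepClosed K] [Finite ι] (n : ℕ) [NeZero (n : K)]
    {w : ι → K} (hw : w ≠ 0) :
    (projPow n ⁻¹' {mk K w hw}).encard = n ^ (w.support.ncard - 1) := by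
  obtain ⟨i₀, hi₀ : w i₀ ≠ 0⟩ := Function.ne_iff.1 hw
  have : NeZero n := .of_neZero_natCast K
  have hw' : (w i₀)⁻¹ • w ≠ 0 := smul_ne_zero (inv_ne_zero hi₀) hw
  have hone : ((w i₀)⁻¹ • w) i₀ = 1 := inv_mul_cancel₀ hi₀
  have hmk : mk K w hw = mk K ((w i₀)⁻¹ • w) hw' :=
    (mk_eq_mk_iff' K _ _ _ _).2 ⟨w i₀, smul_inv_smul₀ hi₀ w⟩
  rw [hmk, encard_projPow_preimage_mk_of_apply_eq_one n hw' hone,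
    encard_setOf_apply_eq_one_and_pow_eq n hone,
    Function.support_const_smul_of_ne_zero _ _ (inv_ne_zero hi₀)]

end PowerMap

/-- The linear form `a` with `labsA = a(z₀³, z₁³, z₂³, z₃³)`. -/
noncomputable def labsLinA : MvPolynomial (Fin 4) ℂ :=
  C (8/9 : ℂ) * X 0 + C (8/9 : ℂ) * X 1 - C (64/63 : ℂ) * X 2 + C (1/63 : ℂ) * X 3

/-- The linear form `b` with `labsB = b(z₀³, z₁³, z₂³, z₃³)`. -/
noncomputable def labsLinB : MvPolynomial (Fin 4) ℂ :=
  C (1/9 : ℂ) * X 0 + C (1/9 : ℂ) * X 1 + C (1/63 : ℂ) * X 2 - C (1/63 : ℂ) * X 3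

/-- The quadratic form `Q = x₀x₁ - a·b` with `labsG = Q(z₀³, z₁³, z₂³, z₃³)`. -/
noncomputable def labsQuadric : MvPolynomial (Fin 4) ℂ := X 0 * X 1 - labsLinA * labsLinB

theorem expand_labsQuadric : expand 3 labsQuadric = labsG := by
  simp [labsQuadric, labsG, labsLinA, labsLinB, labsA, labsB, mul_pow]

/-- The four vectors of cubed coordinates of the singular points of the Labs sextic, indexed by
their vanishing coordinate. -/
def labsVec : Fin 4 → Fin 4 → ℂ :=
  ![![0, 1, 1, 8], ![1, 0, 1, 8], ![1, 1, 0, -49], ![8, 8, -49, 0]]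

theorem labsVec_apply_eq_zero_iff (i j : Fin 4) : labsVec j i = 0 ↔ i = j := by
  fin_cases i <;> fin_cases j <;> simp [labsVec]

theorem labsVec_ne_zero (j : Fin 4) : labsVec j ≠ 0 := fun h ↦ by
  have := (labsVec_apply_eq_zero_iff (j + 1) j).1 (congrFun h _)
  simp at this

theorem ncard_support_labsVec (j : Fin 4) : (labsVec j).support.ncard = 3 := by
  have : (labsVec j).support = {j}ᶜ := by
    ext i
    simp [labsVec_apply_eq_zero_iff]
  rw [this, Set.ncard_compl, Set.ncard_singleton, Nat.card_fin]

/-- The four points of `ℙ³(ℂ)` over which the singular points of the Labs sextic lie. -/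
noncomputable def labsPoint (j : Fin 4) : ℙ ℂ (Fin 4 → ℂ) := mk ℂ (labsVec j) (labsVec_ne_zero j)

theorem labsPoint_injective : labsPoint.Injective := fun j k h ↦ by
  obtain ⟨c, hc⟩ := (mk_eq_mk_iff' ℂ _ _ _ _).1 h
  have hc₀ : c ≠ 0 := by
    rintro rfl
    exact labsVec_ne_zero j (by rw [← hc, zero_smul])
  have hj : c * labsVec k j = 0 := (congrFun hc j).trans ((labsVec_apply_eq_zero_iff j j).2 rfl)
  exact (labsVec_apply_eq_zero_iff j k).1 ((mul_eq_zero_iff_left hc₀).1 hj)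

theorem eval_pderiv_labsQuadric (x : Fin 4 → ℂ) :
    (fun i ↦ eval x (pderiv i labsQuadric)) =
      ![x 1 - (16 * (x 0 + x 1) - 8 * x 2 - x 3) / 81,
        x 0 - (16 * (x 0 + x 1) - 8 * x 2 - x 3) / 81,
        (392 * (x 0 + x 1) + 128 * x 2 - 65 * x 3) / 3969,
        (49 * (x 0 + x 1) - 65 * x 2 + 2 * x 3) / 3969] := by
  ext i
  fin_cases i <;> simp [labsQuadric, labsLinA, labsLinB, pderiv_X] <;> ring

theorem eq_of_mul_sub_eq_zero {R : Type*} [Ring R] [NoZeroDivisors R] {x y t k : R} (hk : k ≠ 0)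
    (ht : t = k * (x + y)) (hx : x * (y - t) = 0) (hy : y * (x - t) = 0) : x = y := by
  rcases mul_eq_zero.1 hx with rfl | hx <;> rcases mul_eq_zero.1 hy with rfl | hy
  · rfl
  · simpa [(sub_eq_zero.1 hy).symm, hk, eq_comm] using ht
  · simpa [(sub_eq_zero.1 hx).symm, hk, eq_comm] using ht
  · rw [sub_eq_zero.1 hx, sub_eq_zero.1 hy]

theorem exists_eq_smul_labsVec {x : Fin 4 → ℂ}
    (hx : (x 0 = 0 ∧ x 2 = x 1 ∧ x 3 = 8 * x 1) ∨ (x 1 = 0 ∧ x 2 = x 0 ∧ x 3 = 8 * x 0) ∨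
      (x 0 = x 1 ∧ x 2 = 0 ∧ x 3 = -49 * x 0) ∨ (x 0 = x 1 ∧ 8 * x 2 = -49 * x 0 ∧ x 3 = 0)) :
    ∃ j, ∃ c : ℂ, x = c • labsVec j := by
  rcases hx with hx | hx | hx | hx
  on_goal 1 => refine ⟨0, x 1, ?_⟩
  on_goal 2 => refine ⟨1, x 0, ?_⟩
  on_goal 3 => refine ⟨2, x 0, ?_⟩
  on_goal 4 => refine ⟨3, x 0 / 8, ?_⟩
  all_goals
    ext i
    fin_cases i <;> simp [labsVec] <;> grind

theorem exists_eq_smul_labsVec_of_forall_mul_eval_pderiv_eq_zero {x : Fin 4 → ℂ}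
    (hx : ∀ i, x i * eval x (pderiv i labsQuadric) = 0) : ∃ j, ∃ c : ℂ, x = c • labsVec j := by
  set s := x 0 + x 1
  set t := (16 * s - 8 * x 2 - x 3) / 81
  have hgrad := congrFun (eval_pderiv_labsQuadric x)
  have h₀ : x 0 * (x 1 - t) = 0 := by simpa [hgrad 0] using hx 0
  have h₁ : x 1 * (x 0 - t) = 0 := by simpa [hgrad 1] using hx 1
  have h₂ : x 2 = 0 ∨ 392 * s + 128 * x 2 - 65 * x 3 = 0 := by simpa [hgrad 2] using hx 2
  have h₃ : x 3 = 0 ∨ 49 * s - 65 * x 2 + 2 * x 3 = 0 := by simpa [hgrad 3] using hx 3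
  apply exists_eq_smul_labsVec
  rcases h₂ with h₂ | h₂ <;> rcases h₃ with h₃ | h₃
  · have ht : t = 16 / 81 * s := by grind
    have h₀₁ : x 0 = x 1 := eq_of_mul_sub_eq_zero (by norm_num) ht h₀ h₁
    have hx₀ : x 0 = 0 := by grind
    exact .inl ⟨hx₀, by rw [h₂, ← h₀₁, hx₀], by rw [h₃, ← h₀₁, hx₀, mul_zero]⟩
  · have ht : t = 1 / 2 * s := by grind
    have h₀₁ : x 0 = x 1 := eq_of_mul_sub_eq_zero (by norm_num) ht h₀ h₁
    exact .inr (.inr (.inl ⟨h₀₁, h₂, by grind⟩))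
  · have ht : t = 1 / 2 * s := by grind
    have h₀₁ : x 0 = x 1 := eq_of_mul_sub_eq_zero (by norm_num) ht h₀ h₁
    exact .inr (.inr (.inr ⟨h₀₁, by grind, h₃⟩))
  · have h₂s : x 2 = s := by linear_combination (-2 * h₂ - 65 * h₃) / 3969
    have h₃s : x 3 = 8 * s := by linear_combination (-65 * h₂ - 128 * h₃) / 3969
    have ht : t = 0 := by grind
    have hmul : x 0 = 0 ∨ x 1 = 0 := by simpa [ht] using h₀
    rcases hmul with hx₀ | hx₁
    · exact .inl ⟨hx₀, by grind, by grind⟩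
    · exact .inr (.inl ⟨hx₁, by grind, by grind⟩)

theorem forall_mul_eval_pderiv_labsQuadric_eq_zero_iff (x : Fin 4 → ℂ) :
    (∀ i, x i * eval x (pderiv i labsQuadric) = 0) ↔ ∃ j, ∃ c : ℂ, x = c • labsVec j := by
  refine ⟨exists_eq_smul_labsVec_of_forall_mul_eval_pderiv_eq_zero, ?_⟩
  rintro ⟨j, c, rfl⟩ i
  rw [congrFun (eval_pderiv_labsQuadric _) i]
  fin_cases j <;> fin_cases i <;> simp [labsVec] <;> ring_nf <;> simp

theorem projPow_mk_mem_range_labsPoint_iff {n : ℕ} {z : Fin 4 → ℂ} (hz : z ≠ 0) :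
    projPow n (mk ℂ z hz) ∈ Set.range labsPoint ↔ ∃ j, ∃ c : ℂ, z ^ n = c • labsVec j := by
  simp only [Set.mem_range, labsPoint, eq_comm (b := projPow _ _), projPow_mk_eq_mk_iff]

theorem forall_eval_pderiv_labsG_eq_zero_iff {z : Fin 4 → ℂ} (hz : z ≠ 0) :
    (∀ i, eval z (pderiv i labsG) = 0) ↔ projPow 3 (mk ℂ z hz) ∈ Set.range labsPoint := by
  simp only [← expand_labsQuadric, eval_pderiv_expand_eq_zero_iff (n := 3) (by norm_num),
    forall_mul_eval_pderiv_labsQuadric_eq_zero_iff, projPow_mk_mem_range_labsPoint_iff]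

theorem exists_cubes_eq_smul_iff {z : Fin 4 → ℂ} (hz : z ≠ 0) :
    (∃ c : ℂ, c ≠ 0 ∧
      ((fun i ↦ z i ^ 3) = c • ![(0 : ℂ), 1, 1, 8] ∨
       (fun i ↦ z i ^ 3) = c • ![(1 : ℂ), 0, 1, 8] ∨
       (fun i ↦ z i ^ 3) = c • ![(1 : ℂ), 1, 0, -49] ∨
       (fun i ↦ z i ^ 3) = c • ![(8 : ℂ), 8, -49, 0])) ↔
      projPow 3 (mk ℂ z hz) ∈ Set.range labsPoint := by
  have ne_zero {c : ℂ} {j : Fin 4} (h : z ^ 3 = c • labsVec j) : c ≠ 0 := by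
    rintro rfl
    exact pow_ne_zero 3 hz (by rw [h, zero_smul])
  rw [projPow_mk_mem_range_labsPoint_iff]
  constructor
  · rintro ⟨c, -, h | h | h | h⟩
    exacts [⟨0, c, h⟩, ⟨1, c, h⟩, ⟨2, c, h⟩, ⟨3, c, h⟩]
  · rintro ⟨j, c, h⟩
    refine ⟨c, ne_zero h, ?_⟩
    fin_cases j
    exacts [.inl h, .inr (.inl h), .inr (.inr (.inl h)), .inr (.inr (.inr h))]

theorem encard_projPow_preimage_range_labsPoint :
    (projPow 3 ⁻¹' Set.range labsPoint).encard = 36 := by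
  have hfibre (j : Fin 4) : (projPow 3 ⁻¹' {labsPoint j}).encard = 9 := by
    rw [labsPoint, encard_projPow_preimage_mk, ncard_support_labsVec]
    norm_num
  rw [encard_preimage_range _ labsPoint_injective, Finset.sum_congr rfl fun j _ ↦ hfibre j]
  norm_num

/-- The singular locus of the Labs sextic `G = 0` in `ℙ³(ℂ)` is exactly the set of
points represented by `z` with `(z₀³, z₁³, z₂³, z₃³)` a nonzero scalar multiple of one
of `(0,1,1,8)`, `(1,0,1,8)`, `(1,1,0,−49)`, `(8,8,−49,0)`; it has exactly `36` points. -/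
theorem sing_labs_sextic :
    ({p : Projectivization ℂ (Fin 4 → ℂ) |
        ∃ (z : Fin 4 → ℂ) (hz : z ≠ 0), Projectivization.mk ℂ z hz = p ∧
          ∀ i : Fin 4, eval z (pderiv i labsG) = 0}
      = {p : Projectivization ℂ (Fin 4 → ℂ) |
          ∃ (z : Fin 4 → ℂ) (hz : z ≠ 0), Projectivization.mk ℂ z hz = p ∧
            ∃ c : ℂ, c ≠ 0 ∧
              ((fun i => z i ^ 3) = c • ![(0 : ℂ), 1, 1, 8] ∨
               (fun i => z i ^ 3) = c • ![(1 : ℂ), 0, 1, 8] ∨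
               (fun i => z i ^ 3) = c • ![(1 : ℂ), 1, 0, -49] ∨
               (fun i => z i ^ 3) = c • ![(8 : ℂ), 8, -49, 0])}) ∧
    {p : Projectivization ℂ (Fin 4 → ℂ) |
        ∃ (z : Fin 4 → ℂ) (hz : z ≠ 0), Projectivization.mk ℂ z hz = p ∧
          ∀ i : Fin 4, eval z (pderiv i labsG) = 0}.ncard = 36 := by
  have singular_eq := setOf_exists_mk_eq_and (S := projPow 3 ⁻¹' Set.range labsPoint)
    fun _ ↦ forall_eval_pderiv_labsG_eq_zero_iff
  have cubes_eq := setOf_exists_mk_eq_and (S := projPow 3 ⁻¹' Set.range labsPoint)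
    fun _ ↦ exists_cubes_eq_smul_iff
  refine ⟨singular_eq.trans cubes_eq.symm, ?_⟩
  rw [singular_eq, Set.ncard, encard_projPow_preimage_range_labsPoint]
  rfl
end
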